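/- The Taylor coefficients PA_n of the area generating function of 3-sided prudent polygons satisfy, as n → ∞, PA_n = [κ₀ + κ(log₂ n)] · 2ⁿ · n^g + O(2ⁿ · n^{g-1} · log n), where the critical exponent is g = log₂ 3, the principal constant is κ₀ = ( π / (9 log 2 · sin(πg) · Γ(g+1)) ) · ∏_{j=0}^∞ (1 - (1/3)·2^{-j})(1 - (3/2)·2^{-j}) / (1 - (1/2)·2^{-j})², and κ(u) is a smooth periodic function of u with period 1 and mean value zero given by the absolutely convergent Fourier series κ(u) = ∑_{k∈ℤ, k≠0} κ_k e^{2πiku} with κ_k = κ₀ · ( sin(πg) / sin(πg + 2ikπ²/log 2) ) · ( Γ(1+g) / Γ(1+g + 2ikπ/log 2) ). -/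

import Mathlib

open Complex Filter Asymptotics Topology

noncomputable section

/-- finite q-Pochhammer symbol `(x;q)_n` -/
def qPF (x q : ℂ) (n : ℕ) : ℂ := ∏ i ∈ Finset.range n, (1 - x * q ^ i)

/-- infinite q-Pochhammer symbol `(x;q)_∞` -/
def qPI (x q : ℂ) : ℂ := ∏' i : ℕ, (1 - x * q ^ i)

def uF (q : ℂ) : ℂ := q / (1 - q)
def vF (q : ℂ) : ℂ := (1 - q + q ^ 2) / (1 - q)
def aF (q : ℂ) : ℂ := q ^ 2 / (1 - q + q ^ 2)
def AF (q : ℂ) : ℂ := 2 * q * (1 - q) ^ 2 / (1 - 2 * q) ^ 2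
def CF (q : ℂ) : ℂ := 2 * q * (3 - 10 * q + 9 * q ^ 2 - q ^ 3) / ((1 - q) * (1 - 2 * q) ^ 2)
def DF (q : ℂ) : ℂ := CF q - (q ^ 2 / (1 - q) ^ 2) * AF q * qPI (vF q) q / qPI (aF q * vF q) q

/-- the `m`-th term (for `m ≥ 1`) of the explicit series for `PA(q)` -/
def PAterm (q : ℂ) (m : ℕ) : ℂ :=
  (-1) ^ m * q ^ (2 * m) / ((1 - 2 * q) ^ m * (1 - q - q ^ (m + 1))) *
    ∏ k ∈ Finset.Icc 1 (m - 1),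
      ((1 - q - q ^ k + q ^ (k + 1) - q ^ (k + 2)) / (1 - q - q ^ (k + 1)))

/-- the explicit convergent series defining `PA(q)` for small `q` -/
def PAseries (q : ℂ) : ℂ :=
  (-2 * q ^ 3 * (1 - q) ^ 2 / (1 - 2 * q) ^ 2) * (∑' m : ℕ, PAterm q (m + 1))
    + 2 * q * (3 - 10 * q + 9 * q ^ 2 - q ^ 3) / ((1 - 2 * q) ^ 2 * (1 - q))

/-- the critical exponent `g = log₂ 3` -/
def gExp : ℝ := Real.logb 2 3

/-- the principal constant `κ₀` -/
def kappa0 : ℝ :=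
  Real.pi / (9 * Real.log 2 * Real.sin (Real.pi * gExp) * Real.Gamma (gExp + 1)) *
    ∏' j : ℕ, ((1 - (1 / 3) * (2 : ℝ) ^ (-(j : ℤ))) * (1 - (3 / 2) * (2 : ℝ) ^ (-(j : ℤ))) /
      (1 - (1 / 2) * (2 : ℝ) ^ (-(j : ℤ))) ^ 2)

/-- the Fourier coefficients `κ_k` -/
def kappaCoef (k : ℤ) : ℂ :=
  (kappa0 : ℂ) *
    ((Real.sin (Real.pi * gExp) : ℂ) /
      Complex.sin ((Real.pi : ℂ) * (gExp : ℂ) +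
        2 * Complex.I * (k : ℂ) * (Real.pi : ℂ) ^ 2 / (Real.log 2 : ℂ))) *
    (Complex.Gamma (1 + (gExp : ℂ)) /
      Complex.Gamma (1 + (gExp : ℂ) + 2 * Complex.I * (k : ℂ) * (Real.pi : ℂ) / (Real.log 2 : ℂ)))

/-- the oscillating function `κ(u) = ∑_{k≠0} κ_k e^{2πiku}` -/
def kappaFun (u : ℝ) : ℂ :=
  ∑' k : ℤ, if k = 0 then 0 else
    kappaCoef k * Complex.exp (2 * (Real.pi : ℂ) * Complex.I * (k : ℂ) * (u : ℂ))

/-!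
The `q`-binomial theorem turns the series for `PA(q)` into a sum over the simple poles given by
`1 - 2q + q^(j+2) = 0`, which lie outside the disc of radius `1/2` and accumulate at `q = 1/2`. With
`s = 1 - 2q`, replacing every other `q` by `1/2` leaves, up to a constant factor and a smaller
error, the sum of `(3/2)^l 2^(-l) / (s² (s + 2^(-l)))` over `l ∈ ℤ`, which has the same singular
behaviour at `s = 0` as the generating function of the harmonic sums
`F(n) = ∑ l, 3^l (e^(-n 2^(-l)) - 1 + n 2^(-l))`.

Since `F(2x) = 3 F(x)`, the quotient `F(x) / x^g` is periodic in `log₂ x`; its Fourier coefficients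
are values of the Mellin transform of `e^(-t) - 1 + t`, that is, of `Γ(-g + 2πik / log 2)`, and the
reflection formula identifies them with `κ₀` and `κ_k`. So the main term is exactly a multiple of
`F(n)`, and the coefficients of the difference of the two generating functions are bounded by
Cauchy's formula on the circle `|q| = (1 - 1/n) / 2`.
-/

namespace PrudentPolygon

section FourierSeries

/-- Rapidly decreasing sequences `c : ℤ → ℂ`, the Fourier coefficients of smooth functions on the
circle. -/
def RapidDecay (c : ℤ → ℂ) : Prop :=
  ∀ m : ℕ, ∃ C : ℝ, ∀ k : ℤ, |(k : ℝ)| ^ m * ‖c k‖ ≤ C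

/-- The Fourier series `∑ c_k e^{2πiku}` of period `1`, as a function on the line. -/
def fourierSum (c : ℤ → ℂ) (u : ℝ) : ℂ :=
  ∑' k : ℤ, c k * exp (2 * (Real.pi : ℂ) * I * (k : ℂ) * (u : ℂ))

variable {c : ℤ → ℂ}

lemma RapidDecay.const_mul (hc : RapidDecay c) (a : ℂ) : RapidDecay fun k => a * c k := by
  intro m
  obtain ⟨C, hC⟩ := hc m
  refine ⟨‖a‖ * C, fun k => ?_⟩
  rw [norm_mul, mul_left_comm]
  exact mul_le_mul_of_nonneg_left (hC k) (norm_nonneg a)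

lemma RapidDecay.update (hc : RapidDecay c) (k₀ : ℤ) (a : ℂ) :
    RapidDecay (Function.update c k₀ a) := by
  intro m
  obtain ⟨C, hC⟩ := hc m
  refine ⟨max C (|(k₀ : ℝ)| ^ m * ‖a‖), fun k => ?_⟩
  rcases eq_or_ne k k₀ with rfl | hk
  · simp
  · simpa [hk] using Or.inl (hC k)

lemma RapidDecay.summable_pow_mul_norm (hc : RapidDecay c) (m : ℕ) :
    Summable fun k : ℤ => |(k : ℝ)| ^ m * ‖c k‖ := by
  obtain ⟨C, hC⟩ := hc (m + 2)
  have hsum : Summable fun k : ℤ => C * (1 / (k : ℝ) ^ 2) :=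
    (Real.summable_one_div_int_pow.mpr one_lt_two).mul_left C
  refine hsum.of_norm_bounded_eventually ?_
  filter_upwards [(Set.finite_singleton (0 : ℤ)).compl_mem_cofinite] with k hk
  have hk0 : (k : ℝ) ≠ 0 := Int.cast_ne_zero.mpr hk
  rw [Real.norm_of_nonneg (by positivity), mul_one_div, le_div_iff₀ (by positivity), ← sq_abs]
  calc |(k : ℝ)| ^ m * ‖c k‖ * |(k : ℝ)| ^ 2 = |(k : ℝ)| ^ (m + 2) * ‖c k‖ := by ring
    _ ≤ C := hC k

lemma RapidDecay.summable_norm (hc : RapidDecay c) : Summable fun k => ‖c k‖ := by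
  simpa using hc.summable_pow_mul_norm 0

lemma norm_exp_two_pi_I_int_mul (k : ℤ) (u : ℝ) :
    ‖exp (2 * (Real.pi : ℂ) * I * (k : ℂ) * (u : ℂ))‖ = 1 := by
  rw [norm_exp]
  simp

lemma hasSum_fourierSum (hc : Summable fun k => ‖c k‖) (u : ℝ) :
    HasSum (fun k : ℤ => c k * exp (2 * (Real.pi : ℂ) * I * (k : ℂ) * (u : ℂ)))
      (fourierSum c u) := by
  refine (Summable.of_norm ?_).hasSum
  simpa only [norm_mul, norm_exp_two_pi_I_int_mul, mul_one] using hc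

lemma fourierSum_add_one (c : ℤ → ℂ) (u : ℝ) : fourierSum c (u + 1) = fourierSum c u := by
  refine tsum_congr fun k => ?_
  congr 1
  exact exp_eq_exp_iff_exists_int.mpr ⟨k, by push_cast; ring⟩

lemma fourierSum_const_mul (c : ℤ → ℂ) (a : ℂ) (u : ℝ) :
    fourierSum (fun k => a * c k) u = a * fourierSum c u := by
  simp only [fourierSum, mul_assoc, tsum_mul_left]

lemma fourierSum_update_zero (hc : Summable fun k => ‖c k‖) (u : ℝ) :
    c 0 + fourierSum (Function.update c 0 0) u = fourierSum c u := by
  have h := (hasSum_fourierSum hc u).update 0 0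
  have hupd : Function.update (fun k : ℤ => c k * exp (2 * (Real.pi : ℂ) * I * (k : ℂ) * (u : ℂ)))
      0 0 = fun k : ℤ => Function.update c 0 0 k *
        exp (2 * (Real.pi : ℂ) * I * (k : ℂ) * (u : ℂ)) := by
    ext k
    rcases eq_or_ne k 0 with rfl | hk <;> simp [*]
  rw [hupd] at h
  rw [fourierSum, h.tsum_eq]
  simp

lemma iteratedDeriv_exp_two_pi_I_int_mul (k : ℤ) (a : ℂ) (m : ℕ) :
    iteratedDeriv m (fun u : ℝ => a * exp (2 * (Real.pi : ℂ) * I * (k : ℂ) * (u : ℂ))) =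
      fun u : ℝ => (2 * (Real.pi : ℂ) * I * (k : ℂ)) ^ m *
        (a * exp (2 * (Real.pi : ℂ) * I * (k : ℂ) * (u : ℂ))) := by
  set w : ℂ := 2 * (Real.pi : ℂ) * I * (k : ℂ)
  have hderiv (u : ℝ) : HasDerivAt (fun u : ℝ => exp (w * (u : ℂ))) (exp (w * (u : ℂ)) * w) u := by
    simpa using (ofRealCLM.hasDerivAt.const_mul w).cexp
  induction m with
  | zero => simp
  | succ m ih =>
    ext u
    rw [iteratedDeriv_succ, ih, (((hderiv u).const_mul a).const_mul (w ^ m)).deriv]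
    ring

lemma contDiff_fourierSum (hc : RapidDecay c) : ContDiff ℝ (⊤ : ℕ∞) (fourierSum c) := by
  refine contDiff_tsum (v := fun m (k : ℤ) => (2 * Real.pi) ^ m * (|(k : ℝ)| ^ m * ‖c k‖))
    (fun k => ?_) (fun m _ => (hc.summable_pow_mul_norm m).mul_left _) fun m k u _ => ?_
  · exact contDiff_const.mul (contDiff_const.mul ofRealCLM.contDiff).cexp
  · rw [norm_iteratedFDeriv_eq_norm_iteratedDeriv, iteratedDeriv_exp_two_pi_I_int_mul]
    refine le_of_eq ?_
    simp only [norm_mul, norm_pow, norm_exp_two_pi_I_int_mul, norm_I, norm_intCast, norm_real,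
      Complex.norm_ofNat, Real.norm_of_nonneg Real.pi_nonneg]
    ring

lemma integral_exp_two_pi_I_int_mul {k : ℤ} (hk : k ≠ 0) :
    ∫ u in (0 : ℝ)..1, exp (2 * (Real.pi : ℂ) * I * (k : ℂ) * (u : ℂ)) = 0 := by
  have hperiod : exp (2 * (Real.pi : ℂ) * I * (k : ℂ) * ((1 : ℝ) : ℂ)) = 1 :=
    exp_eq_one_iff.mpr ⟨k, by push_cast; ring⟩
  rw [integral_exp_mul_complex (by simp [Real.pi_ne_zero, hk]), hperiod]
  simp

lemma integral_fourierSum (hc : Summable fun k => ‖c k‖) :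
    ∫ u in (0 : ℝ)..1, fourierSum c u = c 0 := by
  have hcomm := intervalIntegral.hasSum_integral_of_dominated_convergence (a := 0) (b := 1)
    (μ := MeasureTheory.volume)
    (F := fun (k : ℤ) (u : ℝ) => c k * exp (2 * (Real.pi : ℂ) * I * (k : ℂ) * (u : ℂ)))
    (f := fourierSum c) (fun k _ => ‖c k‖)
    (fun k => Continuous.aestronglyMeasurable (by fun_prop))
    (fun k => Eventually.of_forall fun u _ => by rw [norm_mul, norm_exp_two_pi_I_int_mul, mul_one])
    (Eventually.of_forall fun _ _ => hc) intervalIntegrable_const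
    (Eventually.of_forall fun u _ => hasSum_fourierSum hc u)
  refine hcomm.unique ?_
  convert hasSum_single (0 : ℤ) fun k hk => ?_ using 1
  · simp
  · rw [intervalIntegral.integral_const_mul, integral_exp_two_pi_I_int_mul hk, mul_zero]

end FourierSeries

section GammaFunction

lemma norm_Gamma_le_of_re_pos {s : ℂ} (hs : 0 < s.re) : ‖Gamma s‖ ≤ Real.Gamma s.re := by
  rw [Gamma_eq_integral hs, Real.Gamma_eq_integral hs]
  refine (MeasureTheory.norm_integral_le_integral_norm _).trans_eq ?_
  refine MeasureTheory.setIntegral_congr_fun measurableSet_Ioi fun x hx => ?_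
  rw [norm_mul, norm_cpow_eq_rpow_re_of_pos hx, norm_real, Real.norm_of_nonneg (Real.exp_pos _).le,
    sub_re, one_re]

lemma abs_im_pow_mul_norm_Gamma_le (m : ℕ) {s : ℂ} (hs : 0 < s.re + m) (him : s.im ≠ 0) :
    |s.im| ^ m * ‖Gamma s‖ ≤ Real.Gamma (s.re + m) := by
  induction m generalizing s with
  | zero => simpa using norm_Gamma_le_of_re_pos (by simpa using hs)
  | succ m ih =>
    have hs0 : s ≠ 0 := fun h => him (by simp [h])
    have hshift : (s + 1).re + m = s.re + (m + 1 : ℕ) := by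
      simp only [add_re, one_re]
      push_cast
      ring
    calc |s.im| ^ (m + 1) * ‖Gamma s‖ = |s.im| ^ m * (|s.im| * ‖Gamma s‖) := by ring
      _ ≤ |s.im| ^ m * (‖s‖ * ‖Gamma s‖) := by gcongr; exact abs_im_le_norm s
      _ = |(s + 1).im| ^ m * ‖Gamma (s + 1)‖ := by simp [Gamma_add_one s hs0]
      _ ≤ Real.Gamma (s.re + (m + 1 : ℕ)) := by
        rw [← hshift]
        exact ih (by rwa [hshift]) (by simpa using him)

lemma rapidDecay_Gamma (σ : ℝ) {ω : ℝ} (hω : ω ≠ 0) :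
    RapidDecay fun k : ℤ => Gamma (σ + k * ω * I) := by
  intro m
  obtain ⟨N, hN⟩ := exists_nat_gt (-σ)
  have hpos : 0 < σ + (m + N : ℕ) := by push_cast; linarith [m.cast_nonneg (α := ℝ)]
  refine ⟨max (‖Gamma σ‖) (Real.Gamma (σ + (m + N : ℕ)) / |ω| ^ (m + N)), fun k => ?_⟩
  rcases eq_or_ne k 0 with rfl | hk
  · refine le_max_of_le_left ?_
    rcases eq_or_ne m 0 with rfl | hm <;> simp [*]
  · refine le_max_of_le_right ?_
    have hk1 : 1 ≤ |(k : ℝ)| := mod_cast Int.one_le_abs hk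
    have hre : ((σ : ℂ) + k * ω * I).re = σ := by simp
    have him : ((σ : ℂ) + k * ω * I).im = k * ω := by simp
    have hdecay := abs_im_pow_mul_norm_Gamma_le (m + N) (s := σ + k * ω * I) (by rwa [hre])
      (by rw [him]; exact mul_ne_zero (Int.cast_ne_zero.mpr hk) hω)
    rw [hre, him, abs_mul, mul_pow] at hdecay
    rw [le_div_iff₀ (by positivity)]
    calc |(k : ℝ)| ^ m * ‖Gamma (σ + k * ω * I)‖ * |ω| ^ (m + N)
        ≤ |(k : ℝ)| ^ (m + N) * ‖Gamma (σ + k * ω * I)‖ * |ω| ^ (m + N) := by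
          gcongr
          exact Nat.le_add_right m N
      _ = |(k : ℝ)| ^ (m + N) * |ω| ^ (m + N) * ‖Gamma (σ + k * ω * I)‖ := by ring
      _ ≤ Real.Gamma (σ + (m + N : ℕ)) := hdecay

end GammaFunction

section Mellin

open MeasureTheory Set

lemma mellin_eq_neg_mellin_deriv {f f' : ℝ → ℂ} {s : ℂ} (hs : s ≠ 0)
    (hderiv : ∀ t ∈ Ioi (0 : ℝ), HasDerivAt f (f' t) t)
    (hf : MellinConvergent f s) (hf' : MellinConvergent f' (s + 1))
    (hzero : Tendsto (fun t : ℝ => f t * (t : ℂ) ^ s) (𝓝[>] 0) (𝓝 0))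
    (htop : Tendsto (fun t : ℝ => f t * (t : ℂ) ^ s) atTop (𝓝 0)) :
    mellin f s = -(1 / s) * mellin f' (s + 1) := by
  simp only [MellinConvergent, mellin, add_sub_cancel_right, smul_eq_mul] at hf hf' ⊢
  have hpow (t : ℝ) (ht : t ∈ Ioi (0 : ℝ)) :
      HasDerivAt (fun t : ℝ => (t : ℂ) ^ s / s) ((t : ℂ) ^ (s - 1)) t := by
    simpa [hs] using (hasDerivAt_ofReal_cpow_const (ne_of_gt ht) hs).div_const s
  have hparts := integral_Ioi_mul_deriv_eq_deriv_mul (a := 0) (a' := 0) (b' := 0) hderiv hpow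
    (hf.congr_fun (fun t _ => mul_comm _ _) measurableSet_Ioi)
    (IntegrableOn.congr_fun (hf'.div_const s)
      (fun t _ => by simp only [Pi.mul_apply]; ring) measurableSet_Ioi)
    (by simpa [Pi.mul_def, mul_div_assoc] using hzero.div_const s)
    (by simpa [Pi.mul_def, mul_div_assoc] using htop.div_const s)
  rw [setIntegral_congr_fun measurableSet_Ioi fun t _ => mul_comm (((t : ℝ) : ℂ) ^ (s - 1)) (f t),
    hparts, ← integral_const_mul, sub_zero, zero_sub, ← integral_neg]
  exact integral_congr_ae (Eventually.of_forall fun t => by ring)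

variable {f : ℝ → ℂ} {p : ℝ} {s : ℂ}

lemma mellinConvergent_of_norm_le_rpow (hf : ContinuousOn f (Ioi 0))
    (htop : ∀ t ∈ Ioi (0 : ℝ), ‖f t‖ ≤ t ^ p) (hzero : ∀ t ∈ Ioi (0 : ℝ), ‖f t‖ ≤ t ^ (p + 1))
    (hs : -(p + 1) < s.re) (hs' : s.re < -p) : MellinConvergent f s := by
  have hbigO {r : ℝ} (hr : ∀ t ∈ Ioi (0 : ℝ), ‖f t‖ ≤ t ^ r) {l : Filter ℝ}
      (hl : ∀ᶠ t in l, t ∈ Ioi (0 : ℝ)) : f =O[l] fun t => t ^ (-(-r)) := by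
    refine IsBigO.of_bound 1 ?_
    filter_upwards [hl] with t ht
    rw [neg_neg, one_mul, Real.norm_of_nonneg (Real.rpow_nonneg (le_of_lt ht) r)]
    exact hr t ht
  exact mellinConvergent_of_isBigO_rpow (hf.locallyIntegrableOn measurableSet_Ioi)
    (hbigO htop (eventually_gt_atTop 0)) hs' (hbigO hzero self_mem_nhdsWithin) hs

lemma norm_mul_cpow_le_rpow {t : ℝ} (ht : 0 < t) (hf : ‖f t‖ ≤ t ^ p) :
    ‖f t * (t : ℂ) ^ s‖ ≤ t ^ (p + s.re) := by
  rw [norm_mul, norm_cpow_eq_rpow_re_of_pos ht, Real.rpow_add ht]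
  gcongr

lemma tendsto_mul_cpow_atTop (hf : ∀ t ∈ Ioi (0 : ℝ), ‖f t‖ ≤ t ^ p) (hs : s.re < -p) :
    Tendsto (fun t : ℝ => f t * (t : ℂ) ^ s) atTop (𝓝 0) := by
  refine squeeze_zero_norm' (a := fun t => t ^ (p + s.re)) ?_ ?_
  · filter_upwards [eventually_gt_atTop 0] with t ht using norm_mul_cpow_le_rpow ht (hf t ht)
  · simpa using tendsto_rpow_neg_atTop (y := -(p + s.re)) (by linarith)

lemma tendsto_mul_cpow_zero (hf : ∀ t ∈ Ioi (0 : ℝ), ‖f t‖ ≤ t ^ p) (hs : -p < s.re) :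
    Tendsto (fun t : ℝ => f t * (t : ℂ) ^ s) (𝓝[>] 0) (𝓝 0) := by
  refine squeeze_zero_norm' (a := fun t => t ^ (p + s.re)) ?_ ?_
  · filter_upwards [self_mem_nhdsWithin] with t ht using norm_mul_cpow_le_rpow ht (hf t ht)
  · have hcont := Real.continuousAt_rpow_const 0 (p + s.re) (Or.inr (by linarith))
    rw [ContinuousAt, Real.zero_rpow (by linarith)] at hcont
    exact hcont.mono_left nhdsWithin_le_nhds

lemma mellin_eq_neg_mellin_deriv_of_norm_le_rpow {f' : ℝ → ℂ}
    (hderiv : ∀ t ∈ Ioi (0 : ℝ), HasDerivAt f (f' t) t) (hcont : ContinuousOn f' (Ioi 0))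
    (htop : ∀ t ∈ Ioi (0 : ℝ), ‖f t‖ ≤ t ^ p) (hzero : ∀ t ∈ Ioi (0 : ℝ), ‖f t‖ ≤ t ^ (p + 1))
    (htop' : ∀ t ∈ Ioi (0 : ℝ), ‖f' t‖ ≤ t ^ (p - 1))
    (hzero' : ∀ t ∈ Ioi (0 : ℝ), ‖f' t‖ ≤ t ^ p)
    (hs : -(p + 1) < s.re) (hs' : s.re < -p) (hs0 : s ≠ 0) :
    mellin f s = -(1 / s) * mellin f' (s + 1) :=
  mellin_eq_neg_mellin_deriv hs0 hderiv
    (mellinConvergent_of_norm_le_rpow (fun t ht => (hderiv t ht).continuousAt.continuousWithinAt)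
      htop hzero hs hs')
    (mellinConvergent_of_norm_le_rpow hcont htop' (by simpa using hzero')
      (by rw [add_re, one_re]; linarith) (by rw [add_re, one_re]; linarith))
    (tendsto_mul_cpow_zero hzero hs) (tendsto_mul_cpow_atTop htop hs')

/-- The second order remainder `e^{-t} - 1 + t` of the exponential, whose Mellin transform is the
Gamma function in the strip `-2 < re s < -1`. -/
def expRemainder (t : ℝ) : ℝ := Real.exp (-t) - 1 + t

lemma expRemainder_nonneg (t : ℝ) : 0 ≤ expRemainder t := by
  unfold expRemainder
  linarith [Real.add_one_le_exp (-t)]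

lemma expRemainder_le_self {t : ℝ} (ht : 0 ≤ t) : expRemainder t ≤ t := by
  unfold expRemainder
  linarith [Real.exp_le_one_iff.mpr (neg_nonpos.mpr ht)]

lemma expRemainder_le_sq {t : ℝ} (ht : 0 ≤ t) : expRemainder t ≤ t ^ 2 := by
  have hinv : Real.exp (-t) ≤ (t + 1)⁻¹ := by
    rw [Real.exp_neg]
    gcongr
    exact Real.add_one_le_exp t
  have hquad : (t + 1)⁻¹ ≤ 1 - t + t ^ 2 := by
    rw [inv_le_iff_one_le_mul₀ (by linarith)]
    nlinarith [pow_nonneg ht 3]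
  unfold expRemainder
  linarith

lemma continuous_expRemainder : Continuous expRemainder := by
  unfold expRemainder
  fun_prop

lemma hasDerivAt_expRemainder (t : ℝ) : HasDerivAt expRemainder (1 - Real.exp (-t)) t := by
  have h := (((hasDerivAt_neg t).exp.sub_const 1).add (hasDerivAt_id t))
  exact h.congr_deriv (by ring)

lemma mellin_one_sub_exp_neg (hs : -1 < s.re) (hs' : s.re < 0) :
    mellin (fun t => ((1 - Real.exp (-t) : ℝ) : ℂ)) s = -Gamma s := by
  have hs0 : s ≠ 0 := by rintro rfl; simp at hs'
  have hexp (t : ℝ) (ht : t ∈ Ioi (0 : ℝ)) : Real.exp (-t) ≤ t⁻¹ := by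
    rw [Real.exp_neg]
    exact inv_anti₀ ht (by linarith [Real.add_one_le_exp t])
  rw [mellin_eq_neg_mellin_deriv_of_norm_le_rpow (p := 0)
      (f' := fun t => ((Real.exp (-t) : ℝ) : ℂ)) (fun t _ => ?_) (by fun_prop) (fun t ht => ?_)
      (fun t ht => ?_) (fun t ht => ?_) (fun t ht => ?_) (by linarith) (by linarith) hs0,
    ← GammaIntegral_eq_mellin, ← Gamma_eq_integral (by rw [add_re, one_re]; linarith),
    Gamma_add_one s hs0]
  · field_simp
  · simpa using ((hasDerivAt_neg t).exp.const_sub 1).ofReal_comp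
  all_goals
    have hle : Real.exp (-t) ≤ 1 := Real.exp_le_one_iff.mpr (neg_nonpos.mpr (le_of_lt ht))
    rw [norm_real, Real.norm_of_nonneg (by linarith [Real.exp_pos (-t)])]
  · simpa using (Real.exp_pos (-t)).le
  · simpa using by linarith [Real.add_one_le_exp (-t)]
  · simpa [Real.rpow_neg_one] using hexp t ht
  · simpa using (le_of_lt ht)

lemma mellin_expRemainder (hs : -2 < s.re) (hs' : s.re < -1) :
    mellin (fun t => (expRemainder t : ℂ)) s = Gamma s := by
  have hs0 : s ≠ 0 := by rintro rfl; simp at hs'; linarith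
  rw [mellin_eq_neg_mellin_deriv_of_norm_le_rpow (p := 1)
      (f' := fun t => ((1 - Real.exp (-t) : ℝ) : ℂ))
      (fun t _ => (hasDerivAt_expRemainder t).ofReal_comp) (by fun_prop) (fun t ht => ?_)
      (fun t ht => ?_) (fun t ht => ?_) (fun t ht => ?_) (by linarith) hs' hs0,
    mellin_one_sub_exp_neg (by rw [add_re, one_re]; linarith) (by rw [add_re, one_re]; linarith),
    Gamma_add_one s hs0]
  · field_simp
  · rw [norm_real, Real.norm_of_nonneg (expRemainder_nonneg t), Real.rpow_one]
    exact expRemainder_le_self (le_of_lt ht)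
  · rw [norm_real, Real.norm_of_nonneg (expRemainder_nonneg t), one_add_one_eq_two, Real.rpow_two]
    exact expRemainder_le_sq (le_of_lt ht)
  all_goals
    have hle : Real.exp (-t) ≤ 1 := Real.exp_le_one_iff.mpr (neg_nonpos.mpr (le_of_lt ht))
    rw [norm_real, Real.norm_of_nonneg (by linarith)]
  · simpa using (Real.exp_pos (-t)).le
  · simpa using by linarith [Real.add_one_le_exp (-t)]

end Mellin

section HarmonicSum

open scoped FourierTransform

/-- `e^{-aLy} ψ(e^{Ly})` for the remainder `ψ` of the exponential: the summand of a harmonic sum in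
the logarithmic variable, to which Poisson summation applies. -/
def logRemainder (L a y : ℝ) : ℂ :=
  ((Real.exp (-a * (L * y)) * expRemainder (Real.exp (L * y)) : ℝ) : ℂ)

variable {L a : ℝ}

lemma continuous_logRemainder (L a : ℝ) : Continuous (logRemainder L a) := by
  have := continuous_expRemainder
  unfold logRemainder
  fun_prop

lemma fourier_logRemainder (hL : 0 < L) (ha : 1 < a) (ha' : a < 2) (k : ℤ) :
    𝓕 (logRemainder L a) k =
      (L : ℂ)⁻¹ * Gamma ((-a : ℝ) + k * (-(2 * Real.pi / L) : ℝ) * I) := by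
  set s : ℂ := (-a : ℝ) + k * (-(2 * Real.pi / L) : ℝ) * I with hs
  have hre : s.re = -a := by rw [hs]; simp
  have him : s.im = -(2 * k * Real.pi / L) := by rw [hs]; simp; ring
  have hscale := MeasureTheory.Measure.integral_comp_mul_left (fun v : ℝ =>
    exp (↑(-2 * Real.pi * v * (-(2 * ↑k * Real.pi / L) / (2 * Real.pi))) * I) •
      (Real.exp (- -a * v) • (expRemainder (Real.exp (-v)) : ℂ))) (-L)
  rw [abs_inv, abs_neg, abs_of_pos hL, real_smul, ofReal_inv] at hscale
  rw [← mellin_expRemainder (by linarith) (by linarith), mellin_eq_fourier, hre, him,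
    Real.fourier_real_eq_integral_exp_smul, Real.fourier_real_eq_integral_exp_smul, ← hscale]
  refine MeasureTheory.integral_congr_ae (Eventually.of_forall fun y => ?_)
  simp only [logRemainder, smul_eq_mul, real_smul, ← ofReal_mul]
  have hpi := Real.pi_ne_zero
  congr 4
  · field_simp
  · ring
  · ring_nf

lemma norm_logRemainder_le_exp (hL : 0 < L) (a y : ℝ) :
    ‖logRemainder L a y‖ ≤ Real.exp (-(min (a - 1) (2 - a) * L * |y|)) := by
  have hleft : min (a - 1) (2 - a) * (L * |y|) ≤ (a - 1) * (L * |y|) := by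
    gcongr; exact min_le_left _ _
  have hright : min (a - 1) (2 - a) * (L * |y|) ≤ (2 - a) * (L * |y|) := by
    gcongr; exact min_le_right _ _
  rw [logRemainder, norm_real,
    Real.norm_of_nonneg (mul_nonneg (Real.exp_pos _).le (expRemainder_nonneg _))]
  rcases le_total 0 y with hy | hy
  · rw [abs_of_nonneg hy] at *
    calc Real.exp (-a * (L * y)) * expRemainder (Real.exp (L * y))
        ≤ Real.exp (-a * (L * y)) * Real.exp (L * y) := by
          gcongr; exact expRemainder_le_self (Real.exp_pos _).le
      _ ≤ Real.exp (-(min (a - 1) (2 - a) * L * y)) := by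
          rw [← Real.exp_add, Real.exp_le_exp]; linarith
  · rw [abs_of_nonpos hy] at *
    calc Real.exp (-a * (L * y)) * expRemainder (Real.exp (L * y))
        ≤ Real.exp (-a * (L * y)) * Real.exp (L * y) ^ 2 := by
          gcongr; exact expRemainder_le_sq (Real.exp_pos _).le
      _ ≤ Real.exp (-(min (a - 1) (2 - a) * L * -y)) := by
          rw [← Real.exp_nat_mul, ← Real.exp_add, Real.exp_le_exp]; push_cast; linarith

lemma logRemainder_isBigO (hL : 0 < L) (ha : 1 < a) (ha' : a < 2) :
    logRemainder L a =O[cocompact ℝ] fun y => |y| ^ (-2 : ℝ) := by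
  set δ := min (a - 1) (2 - a) * L
  have hδ : 0 < δ := mul_pos (lt_min (by linarith) (by linarith)) hL
  refine IsBigO.of_bound (2 / δ ^ 2) ?_
  filter_upwards [isCompact_singleton.compl_mem_cocompact] with y (hy : y ≠ 0)
  have hy0 : 0 < |y| := abs_pos.mpr hy
  refine (norm_logRemainder_le_exp hL a y).trans ?_
  rw [Real.norm_of_nonneg (by positivity), Real.rpow_neg hy0.le, Real.rpow_two, Real.exp_neg]
  have hquad := Real.quadratic_le_exp_of_nonneg (x := δ * |y|) (by positivity)
  calc (Real.exp (δ * |y|))⁻¹ ≤ ((δ * |y|) ^ 2 / 2)⁻¹ :=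
        inv_anti₀ (by positivity) (by linarith [mul_pos hδ hy0])
    _ = 2 / δ ^ 2 * (|y| ^ 2)⁻¹ := by field_simp

lemma tsum_logRemainder_add_int (hL : 0 < L) (ha : 1 < a) (ha' : a < 2) (y : ℝ) :
    ∑' l : ℤ, logRemainder L a (y + l) =
      (L : ℂ)⁻¹ * fourierSum (fun k => Gamma ((-a : ℝ) + k * (-(2 * Real.pi / L) : ℝ) * I)) y := by
  have hω : -(2 * Real.pi / L) ≠ 0 := by simp [Real.pi_ne_zero, hL.ne']
  rw [Real.tsum_eq_tsum_fourier_of_rpow_decay_of_summable (continuous_logRemainder L a) one_lt_two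
    (logRemainder_isBigO hL ha ha'), ← fourierSum_const_mul]
  · refine tsum_congr fun k => ?_
    rw [fourier_logRemainder hL ha ha', fourier_coe_apply]
    congr 2
    push_cast
    ring
  · simp only [fourier_logRemainder hL ha ha']
    exact ((rapidDecay_Gamma (-a) hω).summable_norm.of_norm).mul_left _

lemma tsum_rpow_zpow_mul_expRemainder {b x : ℝ} (hb : 1 < b) (ha : 1 < a) (ha' : a < 2)
    (hx : 0 < x) :
    ((∑' l : ℤ, (b ^ a) ^ l * expRemainder (x * b ^ (-l)) : ℝ) : ℂ) =
      (x ^ a : ℝ) * ((Real.log b : ℂ)⁻¹ * fourierSum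
        (fun k => Gamma ((-a : ℝ) + k * (-(2 * Real.pi / Real.log b) : ℝ) * I))
        (Real.logb b x)) := by
  have hb0 : 0 < b := one_pos.trans hb
  rw [← tsum_logRemainder_add_int (Real.log_pos hb) ha ha', ← (Equiv.neg ℤ).tsum_eq, ofReal_tsum,
    ← tsum_mul_left]
  refine tsum_congr fun l => ?_
  have harg : Real.exp (Real.log b * (Real.logb b x + l)) = x * b ^ l := by
    rw [← Real.rpow_def_of_pos hb0, Real.rpow_add hb0, Real.rpow_logb hb0 hb.ne' hx,
      Real.rpow_intCast]
  have hweight : Real.exp (-a * (Real.log b * (Real.logb b x + l))) = (x * b ^ l) ^ (-a) := by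
    rw [← harg, ← Real.exp_mul, mul_comm]
  rw [logRemainder, harg, hweight, ← ofReal_mul, Equiv.neg_apply, neg_neg, ← mul_assoc]
  congr 2
  rw [Real.mul_rpow hx.le (by positivity), ← mul_assoc, ← Real.rpow_add hx, add_neg_cancel,
    Real.rpow_zero, one_mul, ← Real.rpow_intCast, ← Real.rpow_intCast, ← Real.rpow_mul hb0.le,
    ← Real.rpow_mul hb0.le]
  push_cast
  ring_nf

end HarmonicSum

section Oscillation

lemma two_rpow_gExp : (2 : ℝ) ^ gExp = 3 :=
  Real.rpow_logb two_pos (by norm_num) three_pos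

lemma one_lt_gExp : 1 < gExp := by
  rw [gExp, Real.lt_logb_iff_rpow_lt one_lt_two three_pos]
  norm_num

lemma gExp_lt_two : gExp < 2 := by
  rw [gExp, Real.logb_lt_iff_lt_rpow one_lt_two three_pos]
  norm_num

lemma sin_pi_mul_gExp_ne_zero : Real.sin (Real.pi * gExp) ≠ 0 := by
  have hshift : 0 < Real.sin (Real.pi * gExp - Real.pi) :=
    Real.sin_pos_of_pos_of_lt_pi (by nlinarith [Real.pi_pos, one_lt_gExp])
      (by nlinarith [Real.pi_pos, gExp_lt_two])
  rw [Real.sin_sub_pi] at hshift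
  exact (neg_pos.mp hshift).ne

/-- The infinite product in the principal constant `kappa0`. -/
def kappaProduct : ℝ :=
  ∏' j : ℕ, ((1 - (1 / 3) * (2 : ℝ) ^ (-(j : ℤ))) * (1 - (3 / 2) * (2 : ℝ) ^ (-(j : ℤ))) /
    (1 - (1 / 2) * (2 : ℝ) ^ (-(j : ℤ))) ^ 2)

lemma kappaCoef_zero : kappaCoef 0 = kappa0 := by
  have hsin : sin ((Real.pi : ℂ) * gExp) ≠ 0 := mod_cast sin_pi_mul_gExp_ne_zero
  have hGamma : Gamma (1 + (gExp : ℂ)) ≠ 0 :=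
    Gamma_ne_zero_of_re_pos (by simp; linarith [one_lt_gExp])
  simp [kappaCoef, hsin, hGamma]

/-- Euler's reflection formula turns the quotients in the definition into values of `Γ`. -/
lemma kappaCoef_eq (k : ℤ) :
    kappaCoef k = -(kappaProduct / 9) * ((Real.log 2 : ℂ)⁻¹ *
      Gamma ((-gExp : ℝ) + k * (-(2 * Real.pi / Real.log 2) : ℝ) * I)) := by
  set χ : ℂ := 2 * I * k * Real.pi / Real.log 2 with hχ
  set S := sin ((Real.pi : ℂ) * gExp + 2 * I * k * (Real.pi : ℂ) ^ 2 / Real.log 2) with hS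
  have hlog : (Real.log 2 : ℂ) ≠ 0 := mod_cast (Real.log_pos one_lt_two).ne'
  have hsin : (Real.sin (Real.pi * gExp) : ℂ) ≠ 0 := mod_cast sin_pi_mul_gExp_ne_zero
  have hχre : χ.re = 0 := by
    rw [hχ, show 2 * I * k * Real.pi / Real.log 2 = ((2 * k * Real.pi / Real.log 2 : ℝ) : ℂ) * I by
      push_cast; ring, re_ofReal_mul, I_re, mul_zero]
  have hGamma : Gamma (1 + (gExp : ℂ)) ≠ 0 :=
    Gamma_ne_zero_of_re_pos (by simp; linarith [one_lt_gExp])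
  have hGammaχ : Gamma (1 + (gExp : ℂ) + χ) ≠ 0 :=
    Gamma_ne_zero_of_re_pos (by simp [hχre]; linarith [one_lt_gExp])
  have hreflection : Gamma (-gExp - χ) * Gamma (1 + gExp + χ) = -(Real.pi / S) := by
    rw [← div_neg, hS, ← Complex.sin_neg]
    convert Gamma_mul_Gamma_one_sub (-(gExp : ℂ) - χ) using 3 <;> rw [hχ] <;> ring_nf
  have hkappa0 : (kappa0 : ℂ) =
      Real.pi / (9 * Real.log 2 * Real.sin (Real.pi * gExp) * Gamma (1 + gExp)) * kappaProduct := by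
    rw [show kappa0 = _ * kappaProduct from rfl, ofReal_mul, add_comm (1 : ℂ)]
    push_cast [← Gamma_ofReal]
    rfl
  have harg : ((-gExp : ℝ) : ℂ) + k * (-(2 * Real.pi / Real.log 2) : ℝ) * I = -gExp - χ := by
    rw [hχ]; push_cast; ring
  rw [harg, eq_div_of_mul_eq hGammaχ hreflection, kappaCoef, hkappa0, ← hS, ← hχ]
  field_simp

lemma rapidDecay_kappaCoef : RapidDecay kappaCoef := by
  have hω : -(2 * Real.pi / Real.log 2) ≠ 0 :=
    neg_ne_zero.mpr (by positivity)
  simp only [funext kappaCoef_eq]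
  exact ((rapidDecay_Gamma (-gExp) hω).const_mul _).const_mul _

lemma kappaFun_eq_fourierSum : kappaFun = fourierSum (Function.update kappaCoef 0 0) := by
  ext u
  refine tsum_congr fun k => ?_
  rcases eq_or_ne k 0 with rfl | hk <;> simp [*]

lemma kappa0_add_kappaFun (u : ℝ) : kappa0 + kappaFun u = fourierSum kappaCoef u := by
  rw [kappaFun_eq_fourierSum, ← kappaCoef_zero,
    fourierSum_update_zero rapidDecay_kappaCoef.summable_norm]

/-- The harmonic sum `∑ 3^l ψ(x 2^{-l})` over all integers `l`. -/
def dyadicHarmonicSum (x : ℝ) : ℝ := ∑' l : ℤ, (3 : ℝ) ^ l * expRemainder (x * 2 ^ (-l))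

lemma kappa_mul_rpow_eq_dyadicHarmonicSum {x : ℝ} (hx : 0 < x) :
    (kappa0 + kappaFun (Real.logb 2 x)) * (x ^ gExp : ℝ) =
      -(kappaProduct / 9) * (dyadicHarmonicSum x : ℂ) := by
  have hsum := tsum_rpow_zpow_mul_expRemainder one_lt_two one_lt_gExp gExp_lt_two hx
  rw [two_rpow_gExp] at hsum
  rw [dyadicHarmonicSum, hsum, kappa0_add_kappaFun, funext kappaCoef_eq, fourierSum_const_mul,
    fourierSum_const_mul]
  ring

end Oscillation

section QPochhammer

variable {q : ℂ}

lemma qPF_zero (x q : ℂ) : qPF x q 0 = 1 := by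
  simp [qPF]

lemma qPF_succ (x q : ℂ) (n : ℕ) : qPF x q (n + 1) = qPF x q n * (1 - x * q ^ n) :=
  Finset.prod_range_succ _ n

lemma one_sub_ne_zero_of_norm_lt_one {x : ℂ} (hx : ‖x‖ < 1) : 1 - x ≠ 0 := by
  refine sub_ne_zero.mpr ?_
  rintro rfl
  simp at hx

lemma one_sub_mul_pow_ne_zero {x : ℂ} (hx : ‖x‖ < 1) (hq : ‖q‖ ≤ 1) (i : ℕ) :
    1 - x * q ^ i ≠ 0 := by
  refine one_sub_ne_zero_of_norm_lt_one ?_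
  rw [norm_mul, norm_pow]
  exact (mul_le_of_le_one_right (norm_nonneg x) (pow_le_one₀ (norm_nonneg q) hq)).trans_lt hx

lemma qPF_ne_zero {x : ℂ} (hx : ‖x‖ < 1) (hq : ‖q‖ ≤ 1) (n : ℕ) : qPF x q n ≠ 0 :=
  Finset.prod_ne_zero_iff.mpr fun i _ => one_sub_mul_pow_ne_zero hx hq i

lemma summable_norm_neg_mul_pow (x : ℂ) (hq : ‖q‖ < 1) : Summable fun i : ℕ => ‖-(x * q ^ i)‖ := by
  simpa only [norm_neg, norm_mul, norm_pow] using
    (summable_geometric_of_lt_one (norm_nonneg q) hq).mul_left ‖x‖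

lemma multipliable_one_sub_mul_pow (x : ℂ) (hq : ‖q‖ < 1) :
    Multipliable fun i : ℕ => 1 - x * q ^ i := by
  simpa only [sub_eq_add_neg] using
    multipliable_one_add_of_summable (summable_norm_neg_mul_pow x hq)

lemma tendsto_qPF (x : ℂ) (hq : ‖q‖ < 1) : Tendsto (qPF x q) atTop (𝓝 (qPI x q)) :=
  (multipliable_one_sub_mul_pow x hq).tendsto_prod_tprod_nat

lemma qPI_ne_zero {x : ℂ} (hx : ‖x‖ < 1) (hq : ‖q‖ < 1) : qPI x q ≠ 0 := by
  simpa only [qPI, sub_eq_add_neg] using tprod_one_add_ne_zero_of_summable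
    (fun i => by simpa only [sub_eq_add_neg] using one_sub_mul_pow_ne_zero hx hq.le i)
    (summable_norm_neg_mul_pow x hq)

lemma qPI_eq_one_sub_mul (x : ℂ) (hq : ‖q‖ < 1) : qPI x q = (1 - x) * qPI (x * q) q := by
  have hshift (i : ℕ) : 1 - x * q * q ^ i = 1 - x * q ^ (i + 1) := by
    ring
  have hmul := multipliable_one_sub_mul_pow (x * q) hq
  simp only [hshift] at hmul
  have hsplit := tprod_eq_zero_mul' (f := fun i : ℕ => 1 - x * q ^ i) hmul
  rw [pow_zero, mul_one] at hsplit
  rw [qPI, qPI, hsplit, tprod_congr hshift]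

end QPochhammer

section QBinomial

/-- The coefficient `(a;q)_j / (q;q)_j` of the `q`-binomial series. -/
def qBinomCoeff (a q : ℂ) (j : ℕ) : ℂ := qPF a q j / qPF q q j

/-- The limit `(a;q)_∞ / (q;q)_∞` of the coefficients of the `q`-binomial series. -/
def qBinomLimit (a q : ℂ) : ℂ := qPI a q / qPI q q

/-- The `q`-binomial series `∑ (a;q)_j / (q;q)_j x^j`. -/
def qBinomSeries (a q x : ℂ) : ℂ := ∑' j : ℕ, qBinomCoeff a q j * x ^ j

variable {a q x : ℂ}

lemma qBinomCoeff_zero (a q : ℂ) : qBinomCoeff a q 0 = 1 := by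
  simp [qBinomCoeff, qPF_zero]

lemma qBinomCoeff_succ (a q : ℂ) (j : ℕ) :
    qBinomCoeff a q (j + 1) = qBinomCoeff a q j * ((1 - a * q ^ j) / (1 - q ^ (j + 1))) := by
  rw [qBinomCoeff, qPF_succ, qPF_succ, ← pow_succ', mul_div_mul_comm, qBinomCoeff]

lemma one_sub_pow_succ_ne_zero (hq : ‖q‖ < 1) (j : ℕ) : 1 - q ^ (j + 1) ≠ 0 := by
  simpa only [pow_succ'] using one_sub_mul_pow_ne_zero hq hq.le j

lemma qBinomCoeff_succ_mul (a : ℂ) (hq : ‖q‖ < 1) (j : ℕ) :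
    qBinomCoeff a q (j + 1) * (1 - q ^ (j + 1)) = qBinomCoeff a q j * (1 - a * q ^ j) := by
  rw [qBinomCoeff_succ]
  field_simp [one_sub_pow_succ_ne_zero hq j]

lemma norm_qBinomCoeff_factor_sub_one_le {ρ A : ℝ} (hρ : ρ < 1) (hq : ‖q‖ ≤ ρ) (ha : ‖a‖ ≤ A)
    (j : ℕ) : ‖(1 - a * q ^ j) / (1 - q ^ (j + 1)) - 1‖ ≤ (ρ + A) / (1 - ρ) * ρ ^ j := by
  have hne := one_sub_pow_succ_ne_zero (hq.trans_lt hρ) j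
  have hpow : ‖q ^ (j + 1)‖ ≤ ρ := by
    rw [norm_pow]
    exact (pow_le_of_le_one (norm_nonneg q) (hq.trans hρ.le) j.succ_ne_zero).trans hq
  have hden : 1 - ρ ≤ ‖1 - q ^ (j + 1)‖ := by
    have := norm_sub_norm_le (1 : ℂ) (q ^ (j + 1))
    rw [norm_one] at this
    linarith
  have hfactor : (1 - a * q ^ j) / (1 - q ^ (j + 1)) - 1 =
      (q - a) * q ^ j / (1 - q ^ (j + 1)) := by
    field_simp
    ring
  rw [hfactor, norm_div, norm_mul, norm_pow, div_mul_eq_mul_div]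
  have hsub := norm_sub_le q a
  have : 0 < 1 - ρ := sub_pos.mpr hρ
  have hρ0 := (norm_nonneg q).trans hq
  have hA0 := (norm_nonneg a).trans ha
  gcongr
  linarith

lemma norm_qBinomCoeff_le {ρ A : ℝ} (hρ : ρ < 1) (hq : ‖q‖ ≤ ρ) (ha : ‖a‖ ≤ A) (j : ℕ) :
    ‖qBinomCoeff a q j‖ ≤ Real.exp ((ρ + A) / (1 - ρ) * (1 - ρ)⁻¹) := by
  have hρ0 := (norm_nonneg q).trans hq
  have hA0 := (norm_nonneg a).trans ha
  have : 0 < 1 - ρ := sub_pos.mpr hρ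
  have hpartial : ‖qBinomCoeff a q j‖ ≤
      Real.exp ((ρ + A) / (1 - ρ) * ∑ i ∈ Finset.range j, ρ ^ i) := by
    induction j with
    | zero => simp [qBinomCoeff_zero]
    | succ j ih =>
      have hfactor : ‖(1 - a * q ^ j) / (1 - q ^ (j + 1))‖ ≤
          Real.exp ((ρ + A) / (1 - ρ) * ρ ^ j) := by
        have htri := norm_le_norm_sub_add ((1 - a * q ^ j) / (1 - q ^ (j + 1))) 1
        rw [norm_one] at htri
        linarith [norm_qBinomCoeff_factor_sub_one_le hρ hq ha j,
          Real.add_one_le_exp ((ρ + A) / (1 - ρ) * ρ ^ j)]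
      rw [qBinomCoeff_succ, norm_mul, Finset.sum_range_succ, mul_add, Real.exp_add]
      gcongr
  refine hpartial.trans (Real.exp_le_exp.mpr ?_)
  gcongr
  rw [← tsum_geometric_of_lt_one hρ0 hρ]
  exact (summable_geometric_of_lt_one hρ0 hρ).sum_le_tsum _ fun i _ => pow_nonneg hρ0 i

lemma exists_norm_qBinomCoeff_le (a : ℂ) (hq : ‖q‖ < 1) :
    ∃ C : ℝ, ∀ j, ‖qBinomCoeff a q j‖ ≤ C :=
  ⟨_, norm_qBinomCoeff_le hq le_rfl (le_refl ‖a‖)⟩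

lemma summable_qBinomCoeff_mul_pow (a : ℂ) (hq : ‖q‖ < 1) (hx : ‖x‖ < 1) :
    Summable fun j : ℕ => qBinomCoeff a q j * x ^ j := by
  obtain ⟨C, hC⟩ := exists_norm_qBinomCoeff_le a hq
  refine ((summable_geometric_of_lt_one (norm_nonneg x) hx).mul_left C).of_norm_bounded fun j => ?_
  rw [norm_mul, norm_pow]
  gcongr
  exact hC j

lemma tendsto_qBinomCoeff (a : ℂ) (hq : ‖q‖ < 1) :
    Tendsto (qBinomCoeff a q) atTop (𝓝 (qBinomLimit a q)) :=
  (tendsto_qPF a hq).div (tendsto_qPF q hq) (qPI_ne_zero hq hq)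

lemma exists_norm_qBinomCoeff_sub_limit_le (a : ℂ) (hq : ‖q‖ < 1) :
    ∃ C : ℝ, 0 ≤ C ∧ ∀ j, ‖qBinomCoeff a q j - qBinomLimit a q‖ ≤ C * ‖q‖ ^ j := by
  obtain ⟨M, hM⟩ := exists_norm_qBinomCoeff_le a hq
  set K := (‖q‖ + ‖a‖) / (1 - ‖q‖)
  have : 0 < 1 - ‖q‖ := sub_pos.mpr hq
  have hM0 : 0 ≤ M := (norm_nonneg _).trans (hM 0)
  have hstep (j : ℕ) : dist (qBinomCoeff a q j) (qBinomCoeff a q (j + 1)) ≤ M * K * ‖q‖ ^ j := by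
    rw [dist_comm, dist_eq_norm, qBinomCoeff_succ, ← mul_sub_one, norm_mul, mul_assoc]
    gcongr
    exacts [hM j, norm_qBinomCoeff_factor_sub_one_le hq le_rfl le_rfl j]
  refine ⟨M * K / (1 - ‖q‖), by positivity, fun j => ?_⟩
  rw [← dist_eq_norm, div_mul_eq_mul_div]
  exact dist_le_of_le_geometric_of_tendsto _ _ hq hstep (tendsto_qBinomCoeff a hq) j

/-- With `ℓ = 0` this is the functional equation of the `q`-binomial series inside the unit disc;
with `ℓ` the limit of the coefficients it persists beyond the pole at `x = 1`. -/
lemma one_sub_mul_tsum_qBinomCoeff_sub {ℓ : ℂ} (hq : ‖q‖ < 1) (hqx : ‖q * x‖ < 1)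
    (hsum : Summable fun j : ℕ => (qBinomCoeff a q j - ℓ) * x ^ j) :
    (1 - x) * ∑' j : ℕ, (qBinomCoeff a q j - ℓ) * x ^ j =
      (1 - a * x) * qBinomSeries a q (q * x) - ℓ := by
  have hφ := summable_qBinomCoeff_mul_pow a hq hqx
  have hφ_succ := (summable_nat_add_iff 1).mpr hφ
  have hφ_eq := hφ.tsum_eq_zero_add
  have hsum_succ := (summable_nat_add_iff 1).mpr hsum
  have hstep (j : ℕ) : (qBinomCoeff a q (j + 1) - ℓ) * x ^ (j + 1) -
      x * ((qBinomCoeff a q j - ℓ) * x ^ j) =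
      qBinomCoeff a q (j + 1) * (q * x) ^ (j + 1) -
        a * x * (qBinomCoeff a q j * (q * x) ^ j) := by
    linear_combination x ^ (j + 1) * qBinomCoeff_succ_mul a hq j
  have hdiff := (hsum_succ.tsum_sub (hsum.mul_left x)).symm
  rw [tsum_congr hstep, hφ_succ.tsum_sub (hφ.mul_left _), tsum_mul_left, tsum_mul_left] at hdiff
  rw [qBinomCoeff_zero, pow_zero, mul_one] at hφ_eq
  rw [one_sub_mul, qBinomSeries]
  conv_lhs => enter [1]; rw [hsum.tsum_eq_zero_add, qBinomCoeff_zero, pow_zero]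
  linear_combination hdiff - hφ_eq

lemma one_sub_mul_qBinomSeries (a : ℂ) (hq : ‖q‖ < 1) (hx : ‖x‖ < 1) :
    (1 - x) * qBinomSeries a q x = (1 - a * x) * qBinomSeries a q (x * q) := by
  have hqx : ‖q * x‖ < 1 := by
    rw [norm_mul]
    exact mul_lt_one_of_nonneg_of_lt_one_left (norm_nonneg q) hq hx.le
  have h := one_sub_mul_tsum_qBinomCoeff_sub (ℓ := 0) hq hqx
    (by simpa only [sub_zero] using summable_qBinomCoeff_mul_pow a hq hx)
  simp only [sub_zero, mul_comm q x] at h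
  exact h

lemma qPF_mul_qBinomSeries (a : ℂ) (hq : ‖q‖ < 1) (hx : ‖x‖ < 1) (n : ℕ) :
    qPF x q n * qBinomSeries a q x = qPF (a * x) q n * qBinomSeries a q (x * q ^ n) := by
  induction n with
  | zero => simp [qPF_zero]
  | succ n ih =>
    have hxn : ‖x * q ^ n‖ < 1 := by
      rw [norm_mul, norm_pow]
      exact mul_lt_one_of_nonneg_of_lt_one_left (norm_nonneg x) hx
        (pow_le_one₀ (norm_nonneg q) hq.le)
    have hstep := one_sub_mul_qBinomSeries a hq hxn
    rw [mul_assoc x, ← pow_succ] at hstep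
    rw [qPF_succ, qPF_succ]
    linear_combination (1 - x * q ^ n) * ih + qPF (a * x) q n * hstep

lemma tendsto_qBinomSeries_mul_pow (a : ℂ) (hq : ‖q‖ < 1) (hx : ‖x‖ < 1) :
    Tendsto (fun n : ℕ => qBinomSeries a q (x * q ^ n)) atTop (𝓝 1) := by
  have hlim : ∑' j : ℕ, (if j = 0 then (1 : ℂ) else 0) = 1 := tsum_ite_eq 0 fun _ => 1
  rw [← hlim]
  refine tendsto_tsum_of_dominated_convergence
    (summable_qBinomCoeff_mul_pow a hq hx).norm (fun j => ?_)
    (Eventually.of_forall fun n j => ?_)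
  · rcases eq_or_ne j 0 with rfl | hj
    · simp [qBinomCoeff_zero]
    · have hpow : Tendsto (fun n : ℕ => x * q ^ n) atTop (𝓝 0) := by
        simpa using (tendsto_pow_atTop_nhds_zero_of_norm_lt_one hq).const_mul x
      simpa [hj] using (hpow.pow j).const_mul (qBinomCoeff a q j)
  · rw [norm_mul, norm_mul, mul_pow, norm_mul, norm_pow (q ^ n), norm_pow q]
    gcongr
    exact mul_le_of_le_one_right (norm_nonneg _)
      (pow_le_one₀ (by positivity) (pow_le_one₀ (norm_nonneg q) hq.le))

theorem qPI_mul_qBinomSeries (a : ℂ) (hq : ‖q‖ < 1) (hx : ‖x‖ < 1) :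
    qPI x q * qBinomSeries a q x = qPI (a * x) q := by
  have hleft := (tendsto_qPF x hq).mul_const (qBinomSeries a q x)
  have hright := (tendsto_qPF (a * x) hq).mul (tendsto_qBinomSeries_mul_pow a hq hx)
  simp only [qPF_mul_qBinomSeries a hq hx, mul_one] at hleft hright
  exact tendsto_nhds_unique hleft hright

lemma qBinomSeries_ne_zero (hq : ‖q‖ < 1) (hx : ‖x‖ < 1) (hax : ‖a * x‖ < 1) :
    qBinomSeries a q x ≠ 0 := by
  intro h
  have := qPI_mul_qBinomSeries a hq hx
  rw [h, mul_zero] at this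
  exact qPI_ne_zero hax hq this.symm

end QBinomial

section PrudentSeries

variable {q x z : ℂ}

lemma one_sub_norm_le_norm_one_sub (x : ℂ) : 1 - ‖x‖ ≤ ‖1 - x‖ := by
  simpa only [norm_one] using norm_sub_norm_le (1 : ℂ) x

lemma tsum_pow_succ_mul_qBinomSeries (a : ℂ) (hq : ‖q‖ < 1) (hx : ‖x‖ < 1) (hz : ‖z‖ < 1) :
    ∑' m : ℕ, z ^ (m + 1) * qBinomSeries a q (x * q ^ m) =
      ∑' j : ℕ, qBinomCoeff a q j * x ^ j * (z / (1 - z * q ^ j)) := by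
  have hsum : Summable fun p : ℕ × ℕ =>
      z ^ (p.1 + 1) * (qBinomCoeff a q p.2 * (x * q ^ p.1) ^ p.2) := by
    have hprod := ((summable_geometric_of_lt_one (norm_nonneg z) hz).mul_left ‖z‖).mul_of_nonneg
      (summable_qBinomCoeff_mul_pow a hq hx).norm (fun m => by positivity) fun j => norm_nonneg _
    refine hprod.of_norm_bounded fun p => ?_
    rw [norm_mul, norm_pow, norm_mul, norm_mul, norm_pow, norm_mul, norm_pow, norm_pow, pow_succ']
    gcongr
    exact mul_le_of_le_one_right (norm_nonneg x) (pow_le_one₀ (norm_nonneg q) hq.le)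
  have hgeom (j : ℕ) : ∑' m : ℕ, z ^ (m + 1) * (qBinomCoeff a q j * (x * q ^ m) ^ j) =
      qBinomCoeff a q j * x ^ j * (z / (1 - z * q ^ j)) := by
    have hzj : ‖z * q ^ j‖ < 1 := by
      rw [norm_mul, norm_pow]
      exact mul_lt_one_of_nonneg_of_lt_one_left (norm_nonneg z) hz
        (pow_le_one₀ (norm_nonneg q) hq.le)
    rw [div_eq_mul_inv z, ← tsum_geometric_of_norm_lt_one hzj, ← tsum_mul_left, ← tsum_mul_left]
    refine tsum_congr fun m => ?_
    ring
  rw [← tsum_congr hgeom, Summable.tsum_comm (f := fun m j => z ^ (m + 1) *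
    (qBinomCoeff a q j * (x * q ^ m) ^ j)) hsum]
  simp only [qBinomSeries, tsum_mul_left]

lemma norm_aF_le (hq : ‖q‖ ≤ 51 / 100) : ‖aF q‖ ≤ 6 / 5 := by
  have hsq : ‖q ^ 2‖ ≤ (51 / 100) ^ 2 := by
    rw [norm_pow]
    gcongr
  have hden : 22 / 100 ≤ ‖1 - q + q ^ 2‖ := by
    have h := norm_sub_norm_le (1 - q) (-q ^ 2)
    rw [sub_neg_eq_add, norm_neg] at h
    linarith [one_sub_norm_le_norm_one_sub q]
  rw [aF, norm_div, div_le_iff₀ (by linarith)]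
  linarith

lemma one_sub_add_sq_ne_zero (hq : ‖q‖ ≤ 51 / 100) : 1 - q + q ^ 2 ≠ 0 := by
  have h := one_sub_ne_zero_of_norm_lt_one (x := q - q ^ 2) (by
    have hsq : ‖q ^ 2‖ ≤ (51 / 100) ^ 2 := by
      rw [norm_pow]
      gcongr
    linarith [norm_sub_le q (q ^ 2)])
  rwa [sub_sub_eq_add_sub, add_sub_right_comm] at h

lemma aF_mul_vF_mul (hq : ‖q‖ ≤ 51 / 100) : aF q * (vF q * q) = uF q * q * q := by
  have h₁ := one_sub_ne_zero_of_norm_lt_one (hq.trans_lt (by norm_num))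
  have h₂ := one_sub_add_sq_ne_zero hq
  rw [aF, vF, uF]
  field_simp

lemma norm_vF_mul_le {r : ℝ} (hr : r < 1) (hq : ‖q‖ ≤ r) :
    ‖vF q * q‖ ≤ r * (1 + r ^ 2 / (1 - r)) := by
  have hne := one_sub_ne_zero_of_norm_lt_one (hq.trans_lt hr)
  have hv : vF q * q = q * (1 + q ^ 2 / (1 - q)) := by
    rw [vF]
    field_simp
  have : 0 < 1 - r := sub_pos.mpr hr
  have hr0 : 0 ≤ r := (norm_nonneg q).trans hq
  rw [hv, norm_mul]
  gcongr
  refine (norm_add_le _ _).trans ?_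
  rw [norm_one, norm_div, norm_pow]
  gcongr
  linarith [one_sub_norm_le_norm_one_sub q]

lemma norm_vF_mul_le_of_le (hq : ‖q‖ ≤ 51 / 100) : ‖vF q * q‖ ≤ 4 / 5 :=
  (norm_vF_mul_le (by norm_num) hq).trans (by norm_num)

lemma norm_vF_mul_le_of_le_half (hq : ‖q‖ ≤ 1 / 2) : ‖vF q * q‖ ≤ 3 / 4 :=
  (norm_vF_mul_le (by norm_num) hq).trans (by norm_num)

lemma norm_uF_mul_lt_one (hq : ‖q‖ ≤ 51 / 100) : ‖uF q * q‖ < 1 := by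
  have hden := one_sub_norm_le_norm_one_sub q
  rw [uF, div_mul_eq_mul_div, norm_div, norm_mul, div_lt_one (by linarith)]
  nlinarith [norm_nonneg q]

/-- The value at `q v(q)` of the `q`-binomial series of parameter `a(q)`; it normalises the
summands of `PA(q)`. -/
def prudentBinom (q : ℂ) : ℂ := qBinomSeries (aF q) q (vF q * q)

lemma prudentBinom_ne_zero (hq : ‖q‖ ≤ 51 / 100) : prudentBinom q ≠ 0 := by
  have hq1 : ‖q‖ < 1 := hq.trans_lt (by norm_num)
  refine qBinomSeries_ne_zero hq1 ((norm_vF_mul_le_of_le hq).trans_lt (by norm_num)) ?_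
  rw [aF_mul_vF_mul hq, norm_mul]
  exact mul_lt_one_of_nonneg_of_lt_one_left (norm_nonneg _) (norm_uF_mul_lt_one hq) hq1.le

lemma PAterm_succ (hq : 1 - q ≠ 0) (m : ℕ) :
    PAterm q (m + 1) = (-q ^ 2 / (1 - 2 * q)) ^ (m + 1) / (1 - q) *
      (qPF (vF q * q) q m / qPF (uF q * q) q (m + 1)) := by
  have hnum (k : ℕ) : 1 - vF q * q * q ^ k =
      (1 - q - q ^ (k + 1) + q ^ (k + 2) - q ^ (k + 3)) / (1 - q) := by
    rw [vF]
    field_simp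
    ring
  have hden (k : ℕ) : 1 - uF q * q * q ^ k = (1 - q - q ^ (k + 2)) / (1 - q) := by
    rw [uF]
    field_simp
    ring
  have hprod : ∏ k ∈ Finset.Icc 1 m,
      ((1 - q - q ^ k + q ^ (k + 1) - q ^ (k + 2)) / (1 - q - q ^ (k + 1))) =
      qPF (vF q * q) q m / qPF (uF q * q) q m := by
    rw [qPF, qPF, ← Finset.prod_div_distrib]
    induction m with
    | zero => simp
    | succ m ih =>
      rw [Finset.prod_Icc_succ_top (by omega), Finset.prod_range_succ, ih, hnum, hden,
        div_div_div_cancel_right₀ hq]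
  rw [PAterm, Nat.add_sub_cancel, hprod, qPF_succ, hden, pow_mul, div_pow, neg_pow (q ^ 2) (m + 1)]
  field_simp

lemma PAterm_succ_eq_qBinomSeries (hq : ‖q‖ ≤ 51 / 100) (m : ℕ) :
    PAterm q (m + 1) = 1 / ((1 - q) * (1 - uF q * q) * prudentBinom q) *
      ((-q ^ 2 / (1 - 2 * q)) ^ (m + 1) * qBinomSeries (aF q) q (vF q * q * q ^ m)) := by
  have hq1 : ‖q‖ < 1 := hq.trans_lt (by norm_num)
  have hu := norm_uF_mul_lt_one hq
  have hshift : qPF (uF q * q) q (m + 1) = (1 - uF q * q) * qPF (uF q * q * q) q m := by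
    rw [qPF, Finset.prod_range_succ', pow_zero, mul_one, mul_comm, qPF]
    simp only [pow_succ', mul_assoc]
  have huq : ‖uF q * q * q‖ < 1 := by
    rw [norm_mul]
    exact mul_lt_one_of_nonneg_of_lt_one_left (norm_nonneg _) hu hq1.le
  have hbinom := qPF_mul_qBinomSeries (aF q) hq1
    ((norm_vF_mul_le_of_le hq).trans_lt (by norm_num)) m
  rw [aF_mul_vF_mul hq] at hbinom
  have h₁ := one_sub_ne_zero_of_norm_lt_one hq1
  have h₂ := one_sub_ne_zero_of_norm_lt_one hu
  have h₃ := qPF_ne_zero huq hq1.le m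
  have h₄ := prudentBinom_ne_zero hq
  change _ * prudentBinom q = _ at hbinom
  have hquot : qPF (vF q * q) q m / ((1 - uF q * q) * qPF (uF q * q * q) q m) =
      qBinomSeries (aF q) q (vF q * q * q ^ m) / ((1 - uF q * q) * prudentBinom q) := by
    rw [div_eq_div_iff (mul_ne_zero h₂ h₃) (mul_ne_zero h₂ h₄)]
    linear_combination (1 - uF q * q) * hbinom
  rw [PAterm_succ h₁, hshift, hquot, div_mul_div_comm, one_div_mul_eq_div, mul_assoc (1 - q)]

/-- The sum over the simple poles, at the roots of `1 - 2q + q^(j+2)`, into which `PA(q)`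
decomposes. -/
def poleSum (q : ℂ) : ℂ :=
  ∑' j : ℕ, qBinomCoeff (aF q) q j * (vF q * q) ^ j / (1 - 2 * q + q ^ (j + 2))

/-- The weight of `poleSum q` in `(1 - 2q)² PA(q)`. -/
def poleWeight (q : ℂ) : ℂ := 2 * q ^ 5 * (1 - q) / ((1 - uF q * q) * prudentBinom q)

/-- The analytic continuation of `PA(q)` to the disc of radius `1/2`. -/
def prudentContinuation (q : ℂ) : ℂ := poleWeight q * poleSum q / (1 - 2 * q) ^ 2 + CF q

lemma PAseries_eq_prudentContinuation (hq : ‖q‖ < 1 / 4) :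
    PAseries q = prudentContinuation q := by
  have hq' : ‖q‖ ≤ 51 / 100 := by linarith
  have hq1 : ‖q‖ < 1 := by linarith
  have h2q : ‖2 * q‖ < 1 / 2 := by
    rw [norm_mul, Complex.norm_ofNat]
    linarith
  have h₁ := one_sub_ne_zero_of_norm_lt_one hq1
  have := one_sub_ne_zero_of_norm_lt_one (norm_uF_mul_lt_one hq')
  have h₃ := prudentBinom_ne_zero hq'
  have hs := one_sub_ne_zero_of_norm_lt_one (h2q.trans (by norm_num))
  have hz : ‖-q ^ 2 / (1 - 2 * q)‖ < 1 := by
    have := one_sub_norm_le_norm_one_sub (2 * q)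
    rw [norm_div, norm_neg, norm_pow, div_lt_one (by linarith)]
    nlinarith [norm_nonneg q]
  have hpole : ∑' m : ℕ, (-q ^ 2 / (1 - 2 * q)) ^ (m + 1) *
      qBinomSeries (aF q) q (vF q * q * q ^ m) = -q ^ 2 * poleSum q := by
    rw [tsum_pow_succ_mul_qBinomSeries _ hq1
      ((norm_vF_mul_le_of_le hq').trans_lt (by norm_num)) hz, poleSum, ← tsum_mul_left]
    refine tsum_congr fun j => ?_
    have hden : 1 - -q ^ 2 / (1 - 2 * q) * q ^ j = (1 - 2 * q + q ^ (j + 2)) / (1 - 2 * q) := by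
      rw [eq_div_iff hs, neg_div, neg_mul, sub_neg_eq_add, add_mul, mul_right_comm,
        div_mul_cancel₀ _ hs]
      ring
    rw [hden, div_div_div_cancel_right₀ hs]
    ring
  rw [PAseries, tsum_congr (PAterm_succ_eq_qBinomSeries hq'), tsum_mul_left, hpole,
    prudentContinuation, poleWeight, CF]
  field_simp

end PrudentSeries

section Differentiability

open Metric Set

variable {q : ℂ}

lemma mul_norm_pow_sub_pow_le {r : ℝ} {x y : ℂ} (hx : ‖x‖ ≤ r) (hy : ‖y‖ ≤ r) (n : ℕ) :
    r * ‖x ^ n - y ^ n‖ ≤ n * r ^ n * ‖x - y‖ := by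
  have hr : 0 ≤ r := (norm_nonneg x).trans hx
  induction n with
  | zero => simp
  | succ n ih =>
    have hsplit : x ^ (n + 1) - y ^ (n + 1) = x * (x ^ n - y ^ n) + (x - y) * y ^ n := by ring
    calc r * ‖x ^ (n + 1) - y ^ (n + 1)‖
        ≤ r * (r * ‖x ^ n - y ^ n‖ + ‖x - y‖ * r ^ n) := by
          rw [hsplit]
          gcongr
          refine (norm_add_le _ _).trans ?_
          rw [norm_mul, norm_mul, norm_pow]
          gcongr
      _ ≤ r * (n * r ^ n * ‖x - y‖ + ‖x - y‖ * r ^ n) := by gcongr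
      _ = (n + 1 : ℕ) * r ^ (n + 1) * ‖x - y‖ := by
          push_cast
          ring

lemma norm_sub_half (q : ℂ) : ‖q - 1 / 2‖ = 1 / 2 * ‖1 - 2 * q‖ := by
  rw [← norm_neg, show -(q - 1 / 2) = (1 / 2 : ℝ) * (1 - 2 * q) by push_cast; ring, norm_mul,
    Complex.norm_real]
  norm_num

lemma norm_pow_sub_half_pow_le (hq : ‖q‖ ≤ 1 / 2) (n : ℕ) :
    ‖q ^ n - (1 / 2) ^ n‖ ≤ n * (1 / 2) ^ n * ‖1 - 2 * q‖ := by
  have h := mul_norm_pow_sub_pow_le hq (y := 1 / 2) (by norm_num) n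
  rw [norm_sub_half] at h
  linarith

lemma add_three_mul_half_pow_le (j : ℕ) : ((j : ℝ) + 3) * (1 / 2) ^ (j + 3) ≤ 3 / 8 := by
  induction j with
  | zero => norm_num
  | succ j ih =>
    have : 0 ≤ (j : ℝ) * (1 / 2) ^ (j + 3) := by positivity
    rw [show j + 1 + 3 = j + 3 + 1 by ring, pow_succ]
    push_cast
    nlinarith [pow_pos (one_half_pos (α := ℝ)) (j + 3)]

lemma norm_one_sub_two_mul_le (hq : ‖q‖ ≤ 1 / 2) : ‖1 - 2 * q‖ ≤ 2 := by
  have h := norm_sub_le 1 (2 * q)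
  rw [norm_one, norm_mul, Complex.norm_ofNat] at h
  linarith

lemma one_sub_two_mul_re_nonneg (hq : ‖q‖ ≤ 1 / 2) : 0 ≤ (1 - 2 * q).re := by
  have h := (Complex.re_le_norm q).trans hq
  simp only [sub_re, one_re, mul_re, re_ofNat, im_ofNat, zero_mul, sub_zero]
  linarith

/-- When `|1 - 2q|` is below `2^(-j-1)`, the power `q^(j+2)` is within a factor `3/4` of its value
at `q = 1/2`, hence cannot cancel `1 - 2q`, whose real part is nonnegative. -/
lemma max_le_eight_mul_norm_add_pow (hq : ‖q‖ ≤ 1 / 2) (j : ℕ) :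
    max ‖1 - 2 * q‖ ((1 / 2) ^ (j + 2)) ≤ 8 * ‖1 - 2 * q + q ^ (j + 2)‖ := by
  rcases j with _ | j
  · have hfactor : 1 - 2 * q + q ^ (0 + 2) = (1 - q) ^ 2 := by ring
    have hge : 1 / 2 ≤ ‖1 - q‖ := by linarith [one_sub_norm_le_norm_one_sub q]
    rw [hfactor, norm_pow]
    refine max_le ?_ ?_ <;> nlinarith [norm_one_sub_two_mul_le hq]
  set b : ℝ := (1 / 2) ^ (j + 1 + 2) with hb
  have hbpos : 0 < b := by positivity
  rcases le_or_gt (2 * b) ‖1 - 2 * q‖ with h | h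
  · have hqb : ‖q ^ (j + 1 + 2)‖ ≤ b := by
      rw [norm_pow, hb]
      gcongr
    have htri := norm_sub_norm_le (1 - 2 * q) (-q ^ (j + 1 + 2))
    rw [sub_neg_eq_add, norm_neg] at htri
    exact max_le (by linarith) (by linarith)
  · have hpow : ‖q ^ (j + 1 + 2) - (b : ℝ)‖ ≤ 3 / 4 * b := by
      have hdiff := norm_pow_sub_half_pow_le hq (j + 1 + 2)
      have hcoef := add_three_mul_half_pow_le j
      push_cast [hb] at hdiff ⊢
      rw [← hb] at hdiff
      have : ((j : ℝ) + 1 + 2) * ‖1 - 2 * q‖ ≤ 3 / 4 := by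
        have : ((j : ℝ) + 3) * ‖1 - 2 * q‖ ≤ (j + 3) * (2 * b) := by gcongr
        rw [hb] at this
        linarith
      nlinarith
    have hre := (Complex.abs_re_le_norm (q ^ (j + 1 + 2) - (b : ℝ))).trans hpow
    rw [sub_re, ofReal_re, abs_le] at hre
    have hsum := Complex.re_le_norm (1 - 2 * q + q ^ (j + 1 + 2))
    rw [add_re] at hsum
    refine max_le ?_ ?_ <;> linarith [one_sub_two_mul_re_nonneg hq]

lemma one_sub_two_mul_add_pow_ne_zero (hq : ‖q‖ ≤ 1 / 2) (j : ℕ) :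
    1 - 2 * q + q ^ (j + 2) ≠ 0 := by
  have h := max_le_eight_mul_norm_add_pow hq j
  have hpos : (0 : ℝ) < (1 / 2) ^ (j + 2) := by positivity
  exact norm_pos_iff.mp (by linarith [le_max_right ‖1 - 2 * q‖ ((1 / 2) ^ (j + 2))])

lemma one_sub_ne_zero_of_mem_ball (hq : q ∈ ball (0 : ℂ) (51 / 100)) : 1 - q ≠ 0 :=
  one_sub_ne_zero_of_norm_lt_one ((mem_ball_zero_iff.mp hq).trans (by norm_num))

lemma differentiableOn_aF : DifferentiableOn ℂ aF (ball 0 (51 / 100)) := by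
  refine DifferentiableOn.div (by fun_prop) (by fun_prop) fun q hq => ?_
  exact one_sub_add_sq_ne_zero (mem_ball_zero_iff.mp hq).le

lemma differentiableOn_uF : DifferentiableOn ℂ uF (ball 0 (51 / 100)) :=
  DifferentiableOn.div (by fun_prop) (by fun_prop) fun _ => one_sub_ne_zero_of_mem_ball

lemma differentiableOn_vF : DifferentiableOn ℂ vF (ball 0 (51 / 100)) :=
  DifferentiableOn.div (by fun_prop) (by fun_prop) fun _ => one_sub_ne_zero_of_mem_ball

lemma differentiableOn_qBinomCoeff (j : ℕ) :
    DifferentiableOn ℂ (fun q => qBinomCoeff (aF q) q j) (ball 0 (51 / 100)) := by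
  have ha := differentiableOn_aF
  refine DifferentiableOn.div ?_ ?_ fun q hq => ?_
  · simp only [qPF]
    fun_prop
  · simp only [qPF]
    fun_prop
  · have hq1 := (mem_ball_zero_iff.mp hq).trans (by norm_num : (51 / 100 : ℝ) < 1)
    exact qPF_ne_zero hq1 hq1.le j

lemma exists_norm_qBinomCoeff_aF_le : ∃ M : ℝ, 0 ≤ M ∧ ∀ q : ℂ, ‖q‖ ≤ 51 / 100 →
    ∀ j, ‖qBinomCoeff (aF q) q j‖ ≤ M :=
  ⟨_, Real.exp_nonneg _, fun _ hq => norm_qBinomCoeff_le (by norm_num) hq (norm_aF_le hq)⟩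

lemma differentiableOn_prudentBinom : DifferentiableOn ℂ prudentBinom (ball 0 (51 / 100)) := by
  obtain ⟨M, hM0, hM⟩ := exists_norm_qBinomCoeff_aF_le
  refine differentiableOn_tsum_of_summable_norm
    ((summable_geometric_of_lt_one (by norm_num) (by norm_num : (4 / 5 : ℝ) < 1)).mul_left M)
    (fun j => ?_) isOpen_ball fun j q hq => ?_
  · exact (differentiableOn_qBinomCoeff j).mul ((differentiableOn_vF.mul differentiableOn_id).pow j)
  · have hq' := (mem_ball_zero_iff.mp hq).le
    rw [norm_mul, norm_pow]
    gcongr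
    exacts [hM q hq' j, norm_vF_mul_le_of_le hq']

lemma differentiableOn_poleWeight : DifferentiableOn ℂ poleWeight (ball 0 (51 / 100)) := by
  have hu := differentiableOn_uF
  have hφ := differentiableOn_prudentBinom
  refine DifferentiableOn.div (by fun_prop) (by fun_prop) fun q hq => ?_
  have hq' := (mem_ball_zero_iff.mp hq).le
  exact mul_ne_zero (one_sub_ne_zero_of_norm_lt_one (norm_uF_mul_lt_one hq'))
    (prudentBinom_ne_zero hq')

lemma exists_norm_poleSum_term_le : ∃ M : ℝ, 0 ≤ M ∧ ∀ q : ℂ, ‖q‖ ≤ 1 / 2 → ∀ j,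
    ‖qBinomCoeff (aF q) q j * (vF q * q) ^ j / (1 - 2 * q + q ^ (j + 2))‖ ≤
      M * (3 / 4) ^ j / max ‖1 - 2 * q‖ ((1 / 2) ^ (j + 2)) := by
  obtain ⟨M, hM0, hM⟩ := exists_norm_qBinomCoeff_aF_le
  refine ⟨8 * M, by positivity, fun q hq j => ?_⟩
  have hmax : 0 < max ‖1 - 2 * q‖ ((1 / 2) ^ (j + 2)) := lt_max_of_lt_right (by positivity)
  have hden := max_le_eight_mul_norm_add_pow hq j
  have hpos := norm_pos_iff.mpr (one_sub_two_mul_add_pow_ne_zero hq j)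
  rw [norm_div, norm_mul, norm_pow, div_le_div_iff₀ hpos hmax]
  calc ‖qBinomCoeff (aF q) q j‖ * ‖vF q * q‖ ^ j * max ‖1 - 2 * q‖ ((1 / 2) ^ (j + 2))
      ≤ M * (3 / 4) ^ j * (8 * ‖1 - 2 * q + q ^ (j + 2)‖) := by
        gcongr
        exacts [hM q (hq.trans (by norm_num)) j, norm_vF_mul_le_of_le_half hq]
    _ = 8 * M * (3 / 4) ^ j * ‖1 - 2 * q + q ^ (j + 2)‖ := by ring

lemma one_sub_two_mul_ne_zero (hq : q ∈ ball (0 : ℂ) (1 / 2)) : 1 - 2 * q ≠ 0 := by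
  refine one_sub_ne_zero_of_norm_lt_one ?_
  rw [norm_mul, Complex.norm_ofNat]
  linarith [mem_ball_zero_iff.mp hq]

lemma differentiableOn_poleSum : DifferentiableOn ℂ poleSum (ball 0 (1 / 2)) := by
  have hsub : ball (0 : ℂ) (1 / 2) ⊆ ball 0 (51 / 100) := ball_subset_ball (by norm_num)
  obtain ⟨M, hM0, hM⟩ := exists_norm_poleSum_term_le
  have hmul : DifferentiableOn ℂ (fun q => ∑' j : ℕ, (1 - 2 * q) *
      (qBinomCoeff (aF q) q j * (vF q * q) ^ j / (1 - 2 * q + q ^ (j + 2)))) (ball 0 (1 / 2)) := by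
    refine differentiableOn_tsum_of_summable_norm
      ((summable_geometric_of_lt_one (by norm_num) (by norm_num : (3 / 4 : ℝ) < 1)).mul_left M)
      (fun j => ?_) isOpen_ball fun j q hq => ?_
    · have hc := (differentiableOn_qBinomCoeff j).mono hsub
      have hv := differentiableOn_vF.mono hsub
      refine DifferentiableOn.mul (by fun_prop)
        (DifferentiableOn.div (by fun_prop) (by fun_prop) ?_)
      exact fun q hq => one_sub_two_mul_add_pow_ne_zero (mem_ball_zero_iff.mp hq).le j
    · have hs := norm_pos_iff.mpr (one_sub_two_mul_ne_zero hq)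
      rw [norm_mul]
      calc _ ≤ ‖1 - 2 * q‖ * (M * (3 / 4) ^ j / ‖1 - 2 * q‖) := by
            gcongr
            refine (hM q (mem_ball_zero_iff.mp hq).le j).trans ?_
            gcongr
            exact le_max_left _ _
        _ = M * (3 / 4) ^ j := mul_div_cancel₀ _ hs.ne'
  refine (hmul.div (d := fun q => 1 - 2 * q) (by fun_prop)
    fun _ => one_sub_two_mul_ne_zero).congr fun q hq => ?_
  simp only [tsum_mul_left, Pi.div_apply, poleSum]
  rw [mul_div_cancel_left₀ _ (one_sub_two_mul_ne_zero hq)]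

lemma differentiableOn_prudentContinuation :
    DifferentiableOn ℂ prudentContinuation (ball 0 (1 / 2)) := by
  have hsub : ball (0 : ℂ) (1 / 2) ⊆ ball 0 (51 / 100) := ball_subset_ball (by norm_num)
  have hw := differentiableOn_poleWeight.mono hsub
  have hp := differentiableOn_poleSum
  refine DifferentiableOn.add (DifferentiableOn.div (by fun_prop) (by fun_prop) fun q hq => ?_)
    (DifferentiableOn.div (by fun_prop) (by fun_prop) fun q hq => ?_)
  · exact pow_ne_zero 2 (one_sub_two_mul_ne_zero hq)
  · exact mul_ne_zero (one_sub_ne_zero_of_mem_ball (hsub hq))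
      (pow_ne_zero 2 (one_sub_two_mul_ne_zero hq))

lemma hasSum_of_differentiableOn_ball {f : ℂ → ℂ} {R : ℝ} (hf : DifferentiableOn ℂ f (ball 0 R))
    {c : ℕ → ℂ} (hc : ∀ᶠ z in 𝓝 0, HasSum (fun n => c n * z ^ n) (f z)) {z : ℂ}
    (hz : z ∈ ball (0 : ℂ) R) : HasSum (fun n => c n * z ^ n) (f z) := by
  obtain ⟨S, hzS, hSR⟩ := exists_between (mem_ball_zero_iff.mp hz)
  have hS : 0 < S := (norm_nonneg z).trans_lt hzS
  have hat : HasFPowerSeriesAt f (FormalMultilinearSeries.ofScalars ℂ c) 0 := by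
    rw [hasFPowerSeriesAt_iff]
    filter_upwards [hc] with w hw
    simpa only [FormalMultilinearSeries.coeff_ofScalars, smul_eq_mul, mul_comm, zero_add] using hw
  have hball := DifferentiableOn.hasFPowerSeriesOnBall (R := ⟨S, hS.le⟩)
    (hf.mono (closedBall_subset_ball hSR)) hS
  rw [← hat.eq_formalMultilinearSeries hball.hasFPowerSeriesAt] at hball
  have hsum := hball.hasSum (mem_eball_zero_iff.mpr (ENNReal.coe_lt_coe.mpr hzS))
  simpa only [FormalMultilinearSeries.apply_eq_pow_smul_coeff,
    FormalMultilinearSeries.coeff_ofScalars, smul_eq_mul, mul_comm, zero_add] using hsum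

lemma hasSum_prudentContinuation {c : ℕ → ℂ} {r : ℝ} (hr : 0 < r)
    (hc : ∀ q : ℂ, ‖q‖ < r → HasSum (fun n => c n * q ^ n) (PAseries q)) (hq : ‖q‖ < 1 / 2) :
    HasSum (fun n => c n * q ^ n) (prudentContinuation q) := by
  refine hasSum_of_differentiableOn_ball differentiableOn_prudentContinuation ?_
    (mem_ball_zero_iff.mpr hq)
  filter_upwards [ball_mem_nhds 0 hr, ball_mem_nhds 0 (by norm_num : (0 : ℝ) < 1 / 4)] with z hz hz'
  rw [← PAseries_eq_prudentContinuation (mem_ball_zero_iff.mp hz')]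
  exact hc z (mem_ball_zero_iff.mp hz)

end Differentiability

section DyadicMinSum

open Set

/-- The sum over dyadic scales `2^(-l)` that bounds every error term near the singularity. The
factor `1 + |l|` makes room for terms differentiated in the scale. -/
def dyadicMinSum (x : ℝ) : ℝ := ∑' l : ℤ, (1 + |(l : ℝ)|) * ((3 / 2) ^ l * min x (2 ^ (-l)))

lemma summable_one_add_mul_pow {r : ℝ} (hr0 : 0 ≤ r) (hr : r < 1) :
    Summable fun n : ℕ => (1 + (n : ℝ)) * r ^ n := by
  have h := summable_pow_mul_geometric_of_norm_lt_one 1 (R := ℝ) (r := r)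
    (by rwa [Real.norm_of_nonneg hr0])
  refine ((summable_geometric_of_lt_one hr0 hr).add h).congr fun n => ?_
  ring

lemma dyadicMinSum_term_nonneg {x : ℝ} (hx : 0 ≤ x) (l : ℤ) :
    0 ≤ (1 + |(l : ℝ)|) * ((3 / 2) ^ l * min x (2 ^ (-l))) := by positivity

lemma summable_dyadicMinSum {x : ℝ} (hx : 0 ≤ x) :
    Summable fun l : ℤ => (1 + |(l : ℝ)|) * ((3 / 2) ^ l * min x (2 ^ (-l))) := by
  refine Summable.of_nat_of_neg ?_ ?_
  · refine .of_nonneg_of_le (fun n => dyadicMinSum_term_nonneg hx n) (fun n => ?_)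
      (summable_one_add_mul_pow (by norm_num) (by norm_num : (3 / 4 : ℝ) < 1))
    calc (1 + |((n : ℤ) : ℝ)|) * ((3 / 2) ^ (n : ℤ) * min x (2 ^ (-(n : ℤ))))
        ≤ (1 + |((n : ℤ) : ℝ)|) * ((3 / 2) ^ (n : ℤ) * 2 ^ (-(n : ℤ))) := by
          gcongr
          exact min_le_right _ _
      _ = (1 + (n : ℝ)) * (3 / 4) ^ n := by
          rw [Int.cast_natCast, Nat.abs_cast, zpow_natCast, zpow_neg, zpow_natCast, ← inv_pow,
            ← mul_pow]
          norm_num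
  · refine .of_nonneg_of_le (fun n => dyadicMinSum_term_nonneg hx (-n)) (fun n => ?_)
      ((summable_one_add_mul_pow (by norm_num) (by norm_num : (2 / 3 : ℝ) < 1)).mul_right x)
    calc (1 + |((-(n : ℤ) : ℤ) : ℝ)|) * ((3 / 2) ^ (-(n : ℤ)) * min x (2 ^ (-(-(n : ℤ)))))
        ≤ (1 + |((-(n : ℤ) : ℤ) : ℝ)|) * ((3 / 2) ^ (-(n : ℤ)) * x) := by
          gcongr
          exact min_le_left _ _
      _ = (1 + (n : ℝ)) * (2 / 3) ^ n * x := by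
          rw [Int.cast_neg, abs_neg, Int.cast_natCast, Nat.abs_cast, zpow_neg, zpow_natCast,
            ← inv_pow, mul_assoc]
          norm_num

lemma le_dyadicMinSum {x : ℝ} (hx : 0 ≤ x) (hx2 : x ≤ 2) : x ≤ dyadicMinSum x := by
  refine le_trans ?_ ((summable_dyadicMinSum hx).le_tsum (-1)
    fun l _ => dyadicMinSum_term_nonneg hx l)
  norm_num [min_eq_left hx2]
  linarith

lemma dyadicMinSum_le_of_lt_two_zpow {x : ℝ} (hx : 0 < x) {J : ℤ} (hxJ : x < 2 ^ (J + 1)) :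
    dyadicMinSum x ≤ (4 / 3) ^ J * (1 + |(J : ℝ)|) * dyadicMinSum 2 := by
  have hterm (l : ℤ) : (1 + |(l : ℝ)|) * ((3 / 2) ^ l * min x (2 ^ (-l))) ≤
      (4 / 3) ^ J * (1 + |(J : ℝ)|) *
        ((1 + |((l + J : ℤ) : ℝ)|) * ((3 / 2) ^ (l + J) * min 2 (2 ^ (-(l + J))))) := by
    have hmin : min x (2 ^ (-l)) ≤ 2 ^ J * min 2 (2 ^ (-(l + J))) := by
      rw [mul_min_of_nonneg _ _ (by positivity), ← zpow_add₀ two_ne_zero,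
        ← zpow_add_one₀ two_ne_zero, neg_add_rev, add_neg_cancel_left]
      exact min_le_min_right _ hxJ.le
    have habs : 1 + |(l : ℝ)| ≤ (1 + |(J : ℝ)|) * (1 + |((l + J : ℤ) : ℝ)|) := by
      have htri := abs_sub ((l + J : ℤ) : ℝ) J
      have := mul_nonneg (abs_nonneg (J : ℝ)) (abs_nonneg ((l + J : ℤ) : ℝ))
      rw [Int.cast_add, add_sub_cancel_right] at htri
      push_cast at this ⊢
      linarith
    calc _ ≤ ((1 + |(J : ℝ)|) * (1 + |((l + J : ℤ) : ℝ)|)) *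
          ((3 / 2) ^ l * (2 ^ J * min 2 (2 ^ (-(l + J))))) := by gcongr
      _ = _ := by
        have hJ : (2 : ℝ) ^ J = (4 / 3) ^ J * (3 / 2) ^ J := by
          rw [← mul_zpow]
          norm_num
        rw [zpow_add₀ (by norm_num : (3 / 2 : ℝ) ≠ 0), hJ]
        ring
  have hsum := ((summable_dyadicMinSum zero_le_two).comp_injective
    (Equiv.addRight J).injective).mul_left ((4 / 3) ^ J * (1 + |(J : ℝ)|))
  refine ((summable_dyadicMinSum hx.le).tsum_le_tsum hterm hsum).trans_eq ?_
  rw [tsum_mul_left, dyadicMinSum]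
  congr 1
  exact (Equiv.addRight J).tsum_eq
    fun l : ℤ => (1 + |(l : ℝ)|) * ((3 / 2) ^ l * min 2 ((2 : ℝ) ^ (-l)))

lemma abs_le_of_mem_Ico_two_zpow {x : ℝ} {J : ℤ} (hJ : x ∈ Ico ((2 : ℝ) ^ J) (2 ^ (J + 1))) :
    |(J : ℝ)| ≤ 1 + 2 * |Real.log x| := by
  have hx : 0 < x := (zpow_pos two_pos J).trans_le hJ.1
  have hlo := Real.log_le_log (by positivity) hJ.1
  have hhi := Real.log_lt_log hx hJ.2
  rw [Real.log_zpow] at hlo hhi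
  push_cast at hhi
  have hlog2 := Real.log_two_gt_d9
  rw [abs_le]
  constructor
  · by_contra! hneg
    have : 0 < (-J - 1) * (Real.log 2 - 1 / 2) :=
      mul_pos (by linarith [abs_nonneg (Real.log x)]) (by linarith)
    linarith [neg_abs_le (Real.log x)]
  · by_contra! hpos
    have : 0 < J * (Real.log 2 - 1 / 2) :=
      mul_pos (by linarith [abs_nonneg (Real.log x)]) (by linarith)
    linarith [le_abs_self (Real.log x)]

lemma four_thirds_zpow_le_rpow {x : ℝ} {J : ℤ} (hJ : (2 : ℝ) ^ J ≤ x) :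
    (4 / 3 : ℝ) ^ J ≤ x ^ (2 - gExp) := by
  have hbase : (4 / 3 : ℝ) = 2 ^ (2 - gExp) := by
    rw [Real.rpow_sub two_pos, two_rpow_gExp]
    norm_num
  calc (4 / 3 : ℝ) ^ J = (2 ^ J) ^ (2 - gExp) := by
        rw [hbase, ← Real.rpow_intCast, ← Real.rpow_intCast, ← Real.rpow_mul two_pos.le,
          ← Real.rpow_mul two_pos.le, mul_comm]
    _ ≤ x ^ (2 - gExp) :=
        Real.rpow_le_rpow (by positivity) hJ (sub_nonneg.mpr gExp_lt_two.le)

lemma exists_dyadicMinSum_le : ∃ C : ℝ, 0 ≤ C ∧ ∀ x : ℝ, 0 < x →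
    dyadicMinSum x ≤ C * x ^ (2 - gExp) * (1 + |Real.log x|) := by
  have hS : 0 ≤ dyadicMinSum 2 := tsum_nonneg (dyadicMinSum_term_nonneg zero_le_two)
  refine ⟨2 * dyadicMinSum 2, by positivity, fun x hx => ?_⟩
  obtain ⟨J, hJ⟩ := exists_mem_Ico_zpow hx one_lt_two
  calc dyadicMinSum x ≤ (4 / 3) ^ J * (1 + |(J : ℝ)|) * dyadicMinSum 2 :=
        dyadicMinSum_le_of_lt_two_zpow hx hJ.2
    _ ≤ x ^ (2 - gExp) * (2 * (1 + |Real.log x|)) * dyadicMinSum 2 := by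
        gcongr
        · exact four_thirds_zpow_le_rpow hJ.1
        · linarith [abs_le_of_mem_Ico_two_zpow hJ]
    _ = 2 * dyadicMinSum 2 * x ^ (2 - gExp) * (1 + |Real.log x|) := by ring

end DyadicMinSum

section HarmonicGeneratingFunction

lemma max_le_norm_add {s : ℂ} (hs : 0 ≤ s.re) {b : ℝ} (hb : 0 ≤ b) : max ‖s‖ b ≤ ‖s + b‖ := by
  have hre : ‖s + b‖ ^ 2 = ‖s‖ ^ 2 + 2 * b * s.re + b ^ 2 := by
    rw [← Complex.normSq_eq_norm_sq, ← Complex.normSq_eq_norm_sq, Complex.normSq_apply,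
      Complex.normSq_apply, add_re, add_im, ofReal_re, ofReal_im]
    ring
  have hcross : 0 ≤ 2 * b * s.re := by positivity
  refine max_le ?_ ?_ <;> refine le_of_sq_le_sq ?_ (norm_nonneg _) <;>
    nlinarith [sq_nonneg b, sq_nonneg ‖s‖]

lemma add_ofReal_ne_zero {s : ℂ} (hs : 0 ≤ s.re) {b : ℝ} (hb : 0 < b) : s + b ≠ 0 :=
  norm_pos_iff.mp ((lt_max_of_lt_right hb).trans_le (max_le_norm_add hs hb.le))

lemma hasSum_expRemainder_mul_pow {b : ℝ} (hb : 0 ≤ b) {z : ℂ} (hz : ‖z‖ < 1) :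
    HasSum (fun n : ℕ => (expRemainder (n * b) : ℂ) * z ^ n)
      (b * z / (1 - z) ^ 2 - 1 / (1 - z) + 1 / (1 - Real.exp (-b) * z)) := by
  have hexp : ‖(Real.exp (-b) : ℂ) * z‖ < 1 := by
    rw [norm_mul, Complex.norm_real, Real.norm_of_nonneg (Real.exp_pos _).le]
    have : Real.exp (-b) ≤ 1 := Real.exp_le_one_iff.mpr (by linarith)
    nlinarith [norm_nonneg z, Real.exp_pos (-b)]
  have hsum := (((hasSum_coe_mul_geometric_of_norm_lt_one hz).mul_left (b : ℂ)).sub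
    (hasSum_geometric_of_norm_lt_one hz)).add (hasSum_geometric_of_norm_lt_one hexp)
  rw [← mul_div_assoc, ← one_div, ← one_div] at hsum
  refine hsum.congr_fun fun n => ?_
  rw [expRemainder, ← mul_neg, Real.exp_nat_mul, mul_pow]
  push_cast
  ring

lemma norm_mul_one_sub_le {b e : ℝ} (hb : 0 < b) (he0 : 0 ≤ e) (he1 : e ≤ 1) (heb : 1 - b ≤ e)
    {s : ℂ} (hs : 0 ≤ s.re) (hs2 : ‖s‖ ≤ 2) :
    ‖s‖ * (1 - e) ≤ 4 * min ‖s‖ b * ‖e * s + (1 - e : ℝ)‖ := by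
  have hre : 0 ≤ ((e : ℂ) * s).re := by
    rw [re_ofReal_mul]
    positivity
  obtain ⟨hDs, hDe⟩ := max_le_iff.mp (max_le_norm_add hre (sub_nonneg.mpr he1))
  rw [norm_mul, Complex.norm_real, Real.norm_of_nonneg he0] at hDs
  have hs0 := norm_nonneg s
  rcases min_choice ‖s‖ b with h | h <;> rw [h]
  · nlinarith
  rcases le_total b (1 / 2) with hb2 | hb2
  · have hhalf : 1 / 2 * ‖s‖ ≤ e * ‖s‖ := by
      gcongr
      linarith
    calc ‖s‖ * (1 - e) ≤ ‖s‖ * b := by gcongr; linarith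
      _ ≤ 4 * b * ‖e * s + (1 - e : ℝ)‖ := by nlinarith
  · nlinarith

lemma exp_neg_add_mul_exp_neg_le_one (b : ℝ) : Real.exp (-b) + b * Real.exp (-b) ≤ 1 := by
  calc Real.exp (-b) + b * Real.exp (-b) = (b + 1) * Real.exp (-b) := by ring
    _ ≤ Real.exp b * Real.exp (-b) := by gcongr; exact Real.add_one_le_exp b
    _ = 1 := by rw [← Real.exp_add, add_neg_cancel, Real.exp_zero]

lemma mul_sub_add_inv_sub_div_eq {b e s : ℂ} (hs : s ≠ 0) (hD : e * s + (1 - e) ≠ 0)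
    (hsb : s + b ≠ 0) :
    s ^ 2 * (b * (1 - s) / s ^ 2 - 1 / s + 1 / (1 - e * (1 - s))) - b ^ 2 / (s + b) =
      s * (-(b * (1 - e)) + s * (1 - e - b * e) - s * (1 - e - b * e) / (s + b)) /
        (e * s + (1 - e)) := by
  rw [show 1 - e * (1 - s) = e * s + (1 - e) by ring]
  generalize hD' : e * s + (1 - e) = D at hD ⊢
  field_simp
  rw [← hD']
  ring

/-- The partial fraction `b² / (s + b)` is what remains of `s² ∑ ψ(nb) (1 - s)^n` when `s` and `b`
are small. -/
lemma norm_expRemainder_generating_sub_le {b : ℝ} (hb : 0 < b) {s : ℂ} (hs0 : s ≠ 0)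
    (hs : 0 ≤ s.re) (hs2 : ‖s‖ ≤ 2) :
    ‖s ^ 2 * (b * (1 - s) / s ^ 2 - 1 / s + 1 / (1 - Real.exp (-b) * (1 - s))) -
      b ^ 2 / (s + b)‖ ≤ 16 * (b * min ‖s‖ b) := by
  have he0 : 0 < Real.exp (-b) := Real.exp_pos _
  have he1 : Real.exp (-b) < 1 := Real.exp_lt_one_iff.mpr (by linarith)
  have heb : 1 - b ≤ Real.exp (-b) := by linarith [Real.add_one_le_exp (-b)]
  have hε0 : 0 ≤ 1 - Real.exp (-b) - b * Real.exp (-b) := by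
    linarith [exp_neg_add_mul_exp_neg_le_one b]
  generalize Real.exp (-b) = e at *
  have hre : 0 ≤ ((e : ℂ) * s).re := by
    rw [re_ofReal_mul]
    positivity
  have hD := add_ofReal_ne_zero hre (sub_pos.mpr he1)
  have hmain := norm_mul_one_sub_le hb he0.le he1.le heb hs hs2
  have hbracket : ‖-(b * (1 - e : ℝ)) + s * (1 - e - b * e : ℝ) -
      s * (1 - e - b * e : ℝ) / (s + b)‖ ≤ 4 * (b * (1 - e)) := by
    have hsb := (le_max_left ‖s‖ b).trans (max_le_norm_add hs hb.le)
    have hratio : ‖s‖ * (1 - e - b * e) / ‖s + b‖ ≤ 1 - e - b * e :=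
      div_le_of_le_mul₀ (norm_nonneg _) hε0 (by nlinarith)
    refine (norm_sub_le _ _).trans ((add_le_add_left (norm_add_le _ _) _).trans ?_)
    rw [norm_div, norm_neg, norm_mul, norm_mul, Complex.norm_of_nonneg hε0,
      Complex.norm_of_nonneg hb.le, Complex.norm_of_nonneg (sub_nonneg.mpr he1.le)]
    nlinarith
  push_cast at hD hmain hbracket
  rw [mul_sub_add_inv_sub_div_eq hs0 hD (add_ofReal_ne_zero hs hb), norm_div, norm_mul,
    div_le_iff₀ (norm_pos_iff.mpr hD)]
  calc ‖s‖ * _ ≤ ‖s‖ * (4 * (b * (1 - e))) := by gcongr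
    _ = 4 * b * (‖s‖ * (1 - e)) := by ring
    _ ≤ 4 * b * (4 * min ‖s‖ b * ‖e * s + (1 - e)‖) := by gcongr
    _ = 16 * (b * min ‖s‖ b) * ‖e * s + (1 - e)‖ := by ring

lemma norm_ofReal_div_add_le {s : ℂ} (hs0 : s ≠ 0) (hs : 0 ≤ s.re) {b : ℝ} (hb : 0 < b) :
    ‖(b : ℂ) / (s + b)‖ ≤ min ‖s‖ b / ‖s‖ := by
  have hsb := max_le_norm_add hs hb.le
  have hpos := norm_pos_iff.mpr (add_ofReal_ne_zero hs hb)
  rw [norm_div, Complex.norm_of_nonneg hb.le, div_le_div_iff₀ hpos (norm_pos_iff.mpr hs0),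
    mul_comm, ← min_mul_max]
  gcongr

lemma norm_div_add_ofReal_le {s : ℂ} (hs : 0 ≤ s.re) {b : ℝ} (hb : 0 < b) :
    ‖s / (s + b)‖ ≤ min ‖s‖ b / b := by
  have hsb := max_le_norm_add hs hb.le
  have hpos := norm_pos_iff.mpr (add_ofReal_ne_zero hs hb)
  rw [norm_div, div_le_div_iff₀ hpos hb, ← min_mul_max]
  gcongr

lemma norm_three_halves_zpow_mul (l : ℤ) (z : ℂ) : ‖(3 / 2 : ℂ) ^ l * z‖ = (3 / 2) ^ l * ‖z‖ := by
  rw [norm_mul, norm_zpow, norm_div, Complex.norm_ofNat, Complex.norm_ofNat]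

lemma le_one_add_abs_mul {x : ℝ} (hx : 0 ≤ x) (l : ℤ) : x ≤ (1 + |(l : ℝ)|) * x :=
  le_mul_of_one_le_left hx (le_add_of_nonneg_right (abs_nonneg _))

/-- The meromorphic function with poles at `-2^(-l)`, `l ∈ ℤ`, that carries the singular behaviour
of `PA(q)` at `q = 1/2` as a function of `s = 1 - 2q`. -/
def dyadicPoleSum (s : ℂ) : ℂ := ∑' l : ℤ, (3 / 2 : ℂ) ^ l * (2 ^ (-l) / (s + 2 ^ (-l)))

lemma summable_dyadicPoleSum {s : ℂ} (hs0 : s ≠ 0) (hs : 0 ≤ s.re) :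
    Summable fun l : ℤ => (3 / 2 : ℂ) ^ l * (2 ^ (-l) / (s + 2 ^ (-l))) := by
  refine .of_norm_bounded ((summable_dyadicMinSum (norm_nonneg s)).div_const ‖s‖) fun l => ?_
  have h := norm_ofReal_div_add_le hs0 hs (zpow_pos two_pos (-l))
  push_cast at h
  rw [norm_three_halves_zpow_mul]
  calc _ ≤ (3 / 2) ^ l * (min ‖s‖ (2 ^ (-l)) / ‖s‖) := by gcongr
    _ ≤ (1 + |(l : ℝ)|) * ((3 / 2) ^ l * (min ‖s‖ (2 ^ (-l)) / ‖s‖)) :=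
        le_one_add_abs_mul (by positivity) l
    _ = _ := by ring

lemma three_zpow_mul_expRemainder_le (n : ℕ) (l : ℤ) :
    (3 : ℝ) ^ l * expRemainder (n * 2 ^ (-l)) ≤
      ((1 + |(l : ℝ)|) * ((3 / 2) ^ l * min 1 (2 ^ (-l)))) * (n : ℝ) ^ 2 := by
  set b : ℝ := 2 ^ (-l) with hb
  have hb0 : 0 < b := by positivity
  have hn : (n : ℝ) ≤ n ^ 2 := by exact_mod_cast Nat.le_self_pow two_ne_zero n
  have hrem : expRemainder (n * b) ≤ b * min 1 b * n ^ 2 := by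
    rcases min_choice 1 b with h | h <;> rw [h]
    · exact (expRemainder_le_self (by positivity)).trans (by nlinarith)
    · exact (expRemainder_le_sq (by positivity)).trans_eq (by ring)
  have hpow : (3 : ℝ) ^ l * b = (3 / 2) ^ l := by
    rw [hb, zpow_neg, div_zpow, div_eq_mul_inv]
  calc (3 : ℝ) ^ l * expRemainder (n * b) ≤ 3 ^ l * (b * min 1 b * n ^ 2) := by gcongr
    _ = ((3 / 2) ^ l * min 1 b) * n ^ 2 := by rw [← hpow]; ring
    _ ≤ _ := mul_le_mul_of_nonneg_right (le_one_add_abs_mul (by positivity) l) (sq_nonneg _)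

lemma summable_three_zpow_mul_expRemainder_mul_pow {z : ℂ} (hz : ‖z‖ < 1) :
    Summable fun p : ℤ × ℕ => ((3 ^ p.1 * expRemainder (p.2 * 2 ^ (-p.1)) : ℝ) : ℂ) * z ^ p.2 := by
  have hpow := summable_pow_mul_geometric_of_norm_lt_one 2 (r := ‖z‖) (by rwa [norm_norm])
  refine .of_norm_bounded ((summable_dyadicMinSum zero_le_one).mul_of_nonneg hpow
    (fun l => dyadicMinSum_term_nonneg zero_le_one l) fun n => by positivity) fun p => ?_
  rw [norm_mul, norm_pow, Complex.norm_of_nonneg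
    (mul_nonneg (by positivity) (expRemainder_nonneg _)), ← mul_assoc]
  exact mul_le_mul_of_nonneg_right (three_zpow_mul_expRemainder_le p.2 p.1) (by positivity)

/-- The generating function of `dyadicHarmonicSum`. -/
def dyadicHarmonicGen (z : ℂ) : ℂ := ∑' n : ℕ, (dyadicHarmonicSum n : ℂ) * z ^ n

lemma hasSum_dyadicHarmonicGen {z : ℂ} (hz : ‖z‖ < 1) :
    HasSum (fun n : ℕ => (dyadicHarmonicSum n : ℂ) * z ^ n) (dyadicHarmonicGen z) := by
  have h := ((summable_three_zpow_mul_expRemainder_mul_pow hz).prod_symm).prod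
  refine (h.congr fun n => ?_).hasSum
  simp only [Prod.fst_swap, Prod.snd_swap, tsum_mul_right, dyadicHarmonicSum, ofReal_tsum]

lemma hasSum_int_dyadicHarmonicGen {z : ℂ} (hz : ‖z‖ < 1) :
    HasSum (fun l : ℤ => (3 : ℂ) ^ l * ((2 ^ (-l) : ℝ) * z / (1 - z) ^ 2 - 1 / (1 - z) +
      1 / (1 - Real.exp (-2 ^ (-l)) * z))) (dyadicHarmonicGen z) := by
  have h := summable_three_zpow_mul_expRemainder_mul_pow hz
  have hval : dyadicHarmonicGen z =
      ∑' p : ℤ × ℕ, ((3 ^ p.1 * expRemainder (p.2 * 2 ^ (-p.1)) : ℝ) : ℂ) * z ^ p.2 := by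
    rw [h.tsum_prod, Summable.tsum_comm (f := fun (n : ℕ) (l : ℤ) =>
      ((3 ^ l * expRemainder (n * 2 ^ (-l)) : ℝ) : ℂ) * z ^ n) h.prod_symm]
    simp only [tsum_mul_right, dyadicHarmonicGen, dyadicHarmonicSum, ofReal_tsum]
  rw [hval]
  refine h.hasSum.prod_fiberwise fun l => ?_
  have hl := (hasSum_expRemainder_mul_pow (zpow_pos two_pos (-l)).le hz).mul_left ((3 : ℂ) ^ l)
  refine hl.congr_fun fun n => ?_
  rw [ofReal_mul, ofReal_zpow, ofReal_ofNat, mul_assoc]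

lemma norm_sq_mul_dyadicHarmonicGen_sub_le {s : ℂ} (hs0 : s ≠ 0) (hs : 0 ≤ s.re)
    (hs1 : ‖1 - s‖ < 1) :
    ‖s ^ 2 * dyadicHarmonicGen (1 - s) - dyadicPoleSum s‖ ≤ 16 * dyadicMinSum ‖s‖ := by
  have hs2 : ‖s‖ ≤ 2 := by
    have := norm_sub_norm_le s 1
    rw [norm_one, norm_sub_rev] at this
    linarith
  have hsum := ((hasSum_int_dyadicHarmonicGen hs1).mul_left (s ^ 2)).sub
    (summable_dyadicPoleSum hs0 hs).hasSum
  rw [dyadicPoleSum, ← hsum.tsum_eq, dyadicMinSum, ← tsum_mul_left]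
  refine tsum_of_norm_bounded ((summable_dyadicMinSum (norm_nonneg s)).mul_left 16).hasSum
    fun l => ?_
  have h := norm_expRemainder_generating_sub_le (zpow_pos two_pos (-l)) hs0 hs hs2
  have hb : (3 / 2 : ℂ) ^ l = 3 ^ l * 2 ^ (-l) := by rw [zpow_neg, div_zpow, div_eq_mul_inv]
  rw [show s ^ 2 * ((3 : ℂ) ^ l * ((2 ^ (-l) : ℝ) * (1 - s) / (1 - (1 - s)) ^ 2 -
      1 / (1 - (1 - s)) + 1 / (1 - Real.exp (-2 ^ (-l)) * (1 - s)))) -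
      (3 / 2 : ℂ) ^ l * (2 ^ (-l) / (s + 2 ^ (-l))) = 3 ^ l * (s ^ 2 * ((2 ^ (-l) : ℝ) * (1 - s) /
      s ^ 2 - 1 / s + 1 / (1 - Real.exp (-2 ^ (-l)) * (1 - s))) -
      (2 ^ (-l) : ℝ) ^ 2 / (s + (2 ^ (-l) : ℝ))) by
    rw [hb, sub_sub_cancel]; push_cast; ring, norm_mul, norm_zpow, Complex.norm_ofNat]
  have hb' : (3 / 2 : ℝ) ^ l = 3 ^ l * 2 ^ (-l) := by rw [zpow_neg, div_zpow, div_eq_mul_inv]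
  calc _ ≤ (3 : ℝ) ^ l * (16 * (2 ^ (-l) * min ‖s‖ (2 ^ (-l)))) := by gcongr
    _ = 16 * ((3 / 2) ^ l * min ‖s‖ (2 ^ (-l))) := by rw [hb']; ring
    _ ≤ _ := mul_le_mul_of_nonneg_left (le_one_add_abs_mul (by positivity) l) (by norm_num)

end HarmonicGeneratingFunction

section FrozenPoleSum

open Set

lemma summable_of_norm_le_dyadicMinSum_term {ι : Type*} {f : ι → ℂ} {e : ι → ℤ}
    (he : Function.Injective e) {x C : ℝ} (hx : 0 ≤ x)
    (hf : ∀ i, ‖f i‖ ≤ C * ((1 + |(e i : ℝ)|) * ((3 / 2) ^ e i * min x (2 ^ (-e i))))) :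
    Summable f :=
  .of_norm_bounded (((summable_dyadicMinSum hx).comp_injective he).mul_left C) hf

lemma norm_tsum_le_mul_dyadicMinSum {ι : Type*} {f : ι → ℂ} {e : ι → ℤ}
    (he : Function.Injective e) {x C : ℝ} (hx : 0 ≤ x) (hC : 0 ≤ C)
    (hf : ∀ i, ‖f i‖ ≤ C * ((1 + |(e i : ℝ)|) * ((3 / 2) ^ e i * min x (2 ^ (-e i))))) :
    ‖∑' i, f i‖ ≤ C * dyadicMinSum x := by
  refine (tsum_of_norm_bounded
    (((summable_dyadicMinSum hx).comp_injective he).hasSum.mul_left C) hf).trans ?_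
  gcongr
  exact tsum_comp_le_tsum_of_inj (summable_dyadicMinSum hx) (dyadicMinSum_term_nonneg hx) he

lemma exists_hasProd_one_sub_mul_two_zpow (x : ℝ) :
    ∃ p : ℝ, HasProd (fun j : ℕ => 1 - x * (2 : ℝ) ^ (-(j : ℤ))) p ∧ (p : ℂ) = qPI x (1 / 2) := by
  have hpow (j : ℕ) : (2 : ℝ) ^ (-(j : ℤ)) = (1 / 2) ^ j := by
    rw [zpow_neg, zpow_natCast, one_div, inv_pow]
  have hsum : Summable fun j : ℕ => ‖-(x * (1 / 2 : ℝ) ^ j)‖ := by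
    simpa only [norm_neg, norm_mul, norm_pow] using
      (summable_geometric_of_lt_one (norm_nonneg (1 / 2 : ℝ)) (by norm_num)).mul_left ‖x‖
  have hprod := (multipliable_one_add_of_summable hsum).hasProd
  refine ⟨_, by simpa only [hpow, sub_eq_add_neg] using hprod, ?_⟩
  have hmap := (hprod.map ofRealHom continuous_ofReal).tprod_eq
  rw [ofRealHom_eq_coe] at hmap
  rw [← hmap, qPI]
  refine tprod_congr fun j => ?_
  simp only [Function.comp_apply, ofRealHom_eq_coe]
  push_cast
  ring

lemma kappaProduct_eq :
    (kappaProduct : ℂ) = -qBinomLimit (1 / 3) (1 / 2) / qBinomSeries (1 / 3) (1 / 2) (3 / 4) := by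
  have hhalf : ‖(1 / 2 : ℂ)‖ < 1 := by norm_num
  obtain ⟨p, hp, hpq⟩ := exists_hasProd_one_sub_mul_two_zpow (1 / 3)
  obtain ⟨r, hr, hrq⟩ := exists_hasProd_one_sub_mul_two_zpow (3 / 2)
  obtain ⟨t, ht, htq⟩ := exists_hasProd_one_sub_mul_two_zpow (1 / 2)
  push_cast at hpq hrq htq
  have ht0 : t ≠ 0 := by
    rw [← ofReal_ne_zero, htq]
    exact qPI_ne_zero hhalf hhalf
  have hκ : kappaProduct = p * r / t ^ 2 := by
    rw [kappaProduct, sq t, ← ((hp.mul hr).div₀ (ht.mul ht) (mul_ne_zero ht0 ht0)).tprod_eq]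
    simp only [sq]
  have hφ := qPI_mul_qBinomSeries (1 / 3) hhalf (x := 3 / 4) (by norm_num)
  have hr' := qPI_eq_one_sub_mul (3 / 2) hhalf
  have ht' := qPI_eq_one_sub_mul (1 / 2) hhalf
  rw [← hrq] at hr'
  rw [← htq] at ht'
  norm_num at hφ hr' ht'
  have hφ0 : qBinomSeries (1 / 3) (1 / 2) (3 / 4) ≠ 0 :=
    qBinomSeries_ne_zero hhalf (by norm_num) (by norm_num)
  have ht0' : (t : ℂ) ≠ 0 := ofReal_ne_zero.mpr ht0
  rw [hκ, qBinomLimit, ← hpq, ← htq]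
  push_cast
  have hrt : r * qBinomSeries (1 / 3) (1 / 2) (3 / 4) = -t := by
    linear_combination qBinomSeries (1 / 3) (1 / 2) (3 / 4) * hr' + ht' - 1 / 2 * hφ
  field_simp
  linear_combination p * hrt

/-- The sum `poleSum` with every `q` except that of `s = 1 - 2q` evaluated at `1/2`. -/
def frozenPoleSum (s : ℂ) : ℂ :=
  ∑' j : ℕ, qBinomCoeff (1 / 3) (1 / 2) j * (3 / 4) ^ j / (s + (1 / 2) ^ (j + 2))

/-- The difference between `qBinomCoeff (1 / 3) (1 / 2) j`, taken to be zero for `j < 0`, and its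
limit as `j → ∞`; it turns `frozenPoleSum` into a multiple of `dyadicPoleSum`. -/
def coeffDefect : ℤ → ℂ
  | Int.ofNat j => qBinomCoeff (1 / 3) (1 / 2) j - qBinomLimit (1 / 3) (1 / 2)
  | Int.negSucc _ => -qBinomLimit (1 / 3) (1 / 2)

lemma coeffDefect_natCast (n : ℕ) :
    coeffDefect n = qBinomCoeff (1 / 3) (1 / 2) n - qBinomLimit (1 / 3) (1 / 2) := rfl

lemma coeffDefect_neg_add_one (n : ℕ) :
    coeffDefect (-(n + 1)) = -qBinomLimit (1 / 3) (1 / 2) := by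
  rw [← Int.negSucc_eq, coeffDefect]

lemma exists_norm_coeffDefect_le :
    ∃ C : ℝ, 0 ≤ C ∧ ∀ j : ℤ, ‖coeffDefect j‖ ≤ C * 2 ^ (-(j + 2)) := by
  obtain ⟨C, hC0, hC⟩ := exists_norm_qBinomCoeff_sub_limit_le (1 / 3)
    (by norm_num : ‖(1 / 2 : ℂ)‖ < 1)
  set K := ‖qBinomLimit (1 / 3) (1 / 2)‖
  refine ⟨4 * C + 2 * K, by positivity, ?_⟩
  rintro (n | n)
  · calc ‖coeffDefect n‖ ≤ C * ‖(1 / 2 : ℂ)‖ ^ n := hC n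
      _ = 4 * C * 2 ^ (-((n : ℤ) + 2)) := by
          rw [neg_add, zpow_add₀ two_ne_zero, zpow_neg, zpow_natCast, ← inv_pow]
          norm_num
          ring
      _ ≤ (4 * C + 2 * K) * 2 ^ (-((n : ℤ) + 2)) := by
          gcongr
          exact le_add_of_nonneg_right (by positivity)
  · have hpow : (2 : ℝ) ^ (-1 : ℤ) ≤ 2 ^ (-(Int.negSucc n + 2)) :=
      zpow_le_zpow_right₀ one_le_two (by lia)
    calc ‖coeffDefect (Int.negSucc n)‖ = 2 * K * 2 ^ (-1 : ℤ) := by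
          rw [coeffDefect, norm_neg]
          ring
      _ ≤ (4 * C + 2 * K) * 2 ^ (-(Int.negSucc n + 2)) := by
          gcongr
          exact le_add_of_nonneg_left (by positivity)

lemma hasSum_three_halves_zpow_mul_coeffDefect :
    HasSum (fun j : ℤ => (3 / 2) ^ j * coeffDefect j)
      (-qBinomSeries (1 / 3) (1 / 2) (3 / 4)) := by
  have hhalf : ‖(1 / 2 : ℂ)‖ < 1 := by norm_num
  set L := qBinomLimit (1 / 3) (1 / 2)
  obtain ⟨C, _, hC⟩ := exists_norm_qBinomCoeff_sub_limit_le (1 / 3) hhalf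
  have hsum : Summable fun j : ℕ => (qBinomCoeff (1 / 3) (1 / 2) j - L) * (3 / 2) ^ j := by
    refine .of_norm_bounded ((summable_geometric_of_lt_one (by norm_num)
      (by norm_num : (3 / 4 : ℝ) < 1)).mul_left C) fun j => ?_
    calc _ ≤ C * ‖(1 / 2 : ℂ)‖ ^ j * ‖(3 / 2 : ℂ)‖ ^ j := by
          rw [norm_mul, norm_pow]
          gcongr
          exact hC j
      _ = C * (3 / 4) ^ j := by
          rw [mul_assoc, ← mul_pow]
          norm_num
  have hval := one_sub_mul_tsum_qBinomCoeff_sub hhalf (by norm_num) hsum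
  have hneg := (hasSum_geometric_of_norm_lt_one (by norm_num : ‖(2 / 3 : ℂ)‖ < 1)).mul_left
    (-(2 / 3) * L)
  norm_num at hval
  have h := HasSum.of_nat_of_neg_add_one (f := fun j : ℤ => (3 / 2) ^ j * coeffDefect j)
    (hsum.hasSum.congr_fun fun n => by rw [coeffDefect_natCast, zpow_natCast, mul_comm])
    (hneg.congr_fun fun n => ?_)
  · convert h using 1
    linear_combination 2 * hval
  · rw [coeffDefect_neg_add_one, zpow_neg, ← Nat.cast_succ, zpow_natCast, ← inv_pow, pow_succ]
    norm_num
    ring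

lemma add_two_zpow_ne_zero {s : ℂ} (hs : 0 ≤ s.re) (l : ℤ) : s + 2 ^ l ≠ 0 := by
  have h := add_ofReal_ne_zero hs (zpow_pos two_pos l)
  push_cast at h
  exact h

lemma exists_norm_defectSum_term_le : ∃ C : ℝ, 0 ≤ C ∧ ∀ s : ℂ, 0 ≤ s.re → ∀ j : ℤ,
    ‖(3 / 2) ^ j * (coeffDefect j * (s / (s + 2 ^ (-(j + 2)))))‖ ≤
      C * ((1 + |((j + 2 : ℤ) : ℝ)|) * ((3 / 2) ^ (j + 2) * min ‖s‖ (2 ^ (-(j + 2))))) := by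
  obtain ⟨C, hC0, hC⟩ := exists_norm_coeffDefect_le
  refine ⟨C, hC0, fun s hs j => ?_⟩
  have hb : (0 : ℝ) < 2 ^ (-(j + 2)) := by positivity
  have hquot := norm_div_add_ofReal_le hs hb
  push_cast at hquot
  set m := min ‖s‖ (2 ^ (-(j + 2)))
  have : 0 ≤ m := by positivity
  calc ‖(3 / 2) ^ j * (coeffDefect j * (s / (s + 2 ^ (-(j + 2)))))‖
      ≤ (3 / 2) ^ j * (C * 2 ^ (-(j + 2)) * (m / 2 ^ (-(j + 2)))) := by
        rw [norm_three_halves_zpow_mul, norm_mul]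
        gcongr
        exact hC j
    _ = C * ((3 / 2) ^ j * m) := by field_simp
    _ ≤ C * ((3 / 2) ^ (j + 2) * m) := by
        gcongr
        · norm_num
        · lia
    _ ≤ _ := by
        gcongr C * ?_
        exact le_one_add_abs_mul (by positivity) _

lemma summable_defectSum {s : ℂ} (hs : 0 ≤ s.re) :
    Summable fun j : ℤ => (3 / 2) ^ j * (coeffDefect j * (s / (s + 2 ^ (-(j + 2))))) := by
  obtain ⟨C, -, hC⟩ := exists_norm_defectSum_term_le
  exact summable_of_norm_le_dyadicMinSum_term (add_left_injective 2) (norm_nonneg s) (hC s hs)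

lemma hasSum_frozenPoleSum {s : ℂ} (hs0 : s ≠ 0) (hs : 0 ≤ s.re) :
    HasSum (fun j : ℕ => qBinomCoeff (1 / 3) (1 / 2) j * (3 / 4) ^ j / (s + (1 / 2) ^ (j + 2)))
      (16 / 9 * qBinomLimit (1 / 3) (1 / 2) * dyadicPoleSum s
        + 4 * -qBinomSeries (1 / 3) (1 / 2) (3 / 4)
        - 4 * ∑' j : ℤ, (3 / 2) ^ j * (coeffDefect j * (s / (s + 2 ^ (-(j + 2)))))) := by
  have hpole := (Equiv.addRight (2 : ℤ)).hasSum_iff.mpr (summable_dyadicPoleSum hs0 hs).hasSum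
  have h := ((hpole.mul_left (16 / 9 * qBinomLimit (1 / 3) (1 / 2))).add
    (hasSum_three_halves_zpow_mul_coeffDefect.mul_left 4)).sub
    ((summable_defectSum hs).hasSum.mul_left 4)
  have hterm (j : ℤ) : 16 / 9 * qBinomLimit (1 / 3) (1 / 2) *
      ((3 / 2) ^ (j + 2) * (2 ^ (-(j + 2)) / (s + 2 ^ (-(j + 2)))))
      + 4 * ((3 / 2) ^ j * coeffDefect j)
      - 4 * ((3 / 2) ^ j * (coeffDefect j * (s / (s + 2 ^ (-(j + 2)))))) =
      4 * (qBinomLimit (1 / 3) (1 / 2) + coeffDefect j) *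
        ((3 / 2) ^ j * 2 ^ (-(j + 2)) / (s + 2 ^ (-(j + 2)))) := by
    have hne := add_two_zpow_ne_zero hs (-(j + 2))
    rw [zpow_add₀ (by norm_num : (3 / 2 : ℂ) ≠ 0)]
    field_simp
    ring
  refine ((Nat.cast_injective (R := ℤ)).hasSum_iff fun j hj => ?_).mpr
    (h.congr_fun fun j => (hterm j).symm) |>.congr_fun fun n => ?_
  · obtain ⟨n, rfl⟩ := Int.eq_negSucc_of_lt_zero (not_le.mp fun h =>
      hj (Int.eq_ofNat_of_zero_le h |>.imp fun _ => Eq.symm))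
    rw [coeffDefect, add_neg_cancel, mul_zero, zero_mul]
  · have hb : (2 : ℂ) ^ (-((n : ℤ) + 2)) = (1 / 2) ^ (n + 2) := by
      rw [zpow_neg, one_div, inv_pow]
      rfl
    rw [Function.comp_apply, coeffDefect_natCast, add_sub_cancel, hb, zpow_natCast, pow_add _ n,
      ← mul_assoc, ← mul_pow]
    norm_num
    ring

lemma exists_norm_frozenPoleSum_sub_le : ∃ C : ℝ, 0 ≤ C ∧ ∀ s : ℂ, s ≠ 0 → 0 ≤ s.re →
    ‖frozenPoleSum s - 16 / 9 * qBinomLimit (1 / 3) (1 / 2) * dyadicPoleSum s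
      + 4 * qBinomSeries (1 / 3) (1 / 2) (3 / 4)‖ ≤ C * dyadicMinSum ‖s‖ := by
  obtain ⟨C, hC0, hC⟩ := exists_norm_defectSum_term_le
  refine ⟨4 * C, by positivity, fun s hs0 hs => ?_⟩
  have h := norm_tsum_le_mul_dyadicMinSum (add_left_injective 2) (norm_nonneg s) hC0 (hC s hs)
  rw [frozenPoleSum, (hasSum_frozenPoleSum hs0 hs).tsum_eq]
  calc _ = ‖(4 : ℂ)‖ * ‖∑' j : ℤ, (3 / 2) ^ j * (coeffDefect j * (s / (s + 2 ^ (-(j + 2)))))‖ := by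
        rw [← norm_mul, ← norm_neg]
        congr 1
        ring
    _ ≤ 4 * (C * dyadicMinSum ‖s‖) := by
        rw [Complex.norm_ofNat]
        gcongr
    _ = _ := by ring

end FrozenPoleSum

section Unfreezing

open Metric Set

variable {q : ℂ}

lemma norm_sub_le_of_forall_norm_le_ball {f : ℂ → ℂ} {c x y : ℂ} {r R M : ℝ} (hrR : r < R)
    (hf : DifferentiableOn ℂ f (ball c R)) (hM : ∀ z ∈ ball c R, ‖f z‖ ≤ M)
    (hx : x ∈ closedBall c r) (hy : y ∈ closedBall c r) :
    ‖f y - f x‖ ≤ M / ((R - r) / 2) * ‖y - x‖ := by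
  have hδ : 0 < (R - r) / 2 := half_pos (sub_pos.mpr hrR)
  have hsub {z : ℂ} (hz : z ∈ closedBall c r) : closedBall z ((R - r) / 2) ⊆ ball c R :=
    (closedBall_subset_closedBall' (by linarith [mem_closedBall.mp hz])).trans
      (closedBall_subset_ball (by linarith : r + (R - r) / 2 < R))
  refine (convex_closedBall c r).norm_image_sub_le_of_norm_deriv_le (𝕜 := ℂ)
    (fun z hz => ?_) (fun z hz => ?_) hx hy
  · exact hf.differentiableAt (isOpen_ball.mem_nhds (closedBall_subset_ball hrR hz))
  · refine norm_deriv_le_of_forall_mem_sphere_norm_le hδ ?_ fun w hw =>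
      hM w (hsub hz (sphere_subset_closedBall hw))
    refine DifferentiableOn.diffContOnCl ?_
    rw [closure_ball _ hδ.ne']
    exact hf.mono (hsub hz)

lemma norm_sub_apply_half_le {f : ℂ → ℂ} {M : ℝ}
    (hf : DifferentiableOn ℂ f (ball 0 (51 / 100))) (hM : ∀ z ∈ ball 0 (51 / 100), ‖f z‖ ≤ M)
    (hq : ‖q‖ ≤ 1 / 2) : ‖f q - f (1 / 2)‖ ≤ 100 * M * ‖1 - 2 * q‖ := by
  have h := norm_sub_le_of_forall_norm_le_ball (r := 1 / 2) (x := 1 / 2) (by norm_num) hf hM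
    (by simp) (mem_closedBall_zero_iff.mpr hq)
  calc ‖f q - f (1 / 2)‖ ≤ M / ((51 / 100 - 1 / 2) / 2) * (1 / 2 * ‖1 - 2 * q‖) := by
        rwa [norm_sub_half] at h
    _ = 100 * M * ‖1 - 2 * q‖ := by ring

lemma exists_norm_sub_apply_half_le {f : ℂ → ℂ}
    (hf : DifferentiableOn ℂ f (ball 0 (51 / 100))) :
    ∃ C : ℝ, 0 ≤ C ∧ ∀ q, ‖q‖ ≤ 1 / 2 → ‖f q - f (1 / 2)‖ ≤ C * ‖1 - 2 * q‖ := by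
  have hslope := (differentiableOn_dslope (c := (1 / 2 : ℂ))
    (isOpen_ball.mem_nhds (by rw [mem_ball_zero_iff]; norm_num))).mpr hf
  obtain ⟨C, hC⟩ := (isCompact_closedBall (0 : ℂ) (1 / 2)).exists_bound_of_continuousOn
    (hslope.continuousOn.mono (closedBall_subset_ball (by norm_num)))
  have hC0 : 0 ≤ C := (norm_nonneg _).trans (hC 0 (mem_closedBall_self (by norm_num)))
  refine ⟨C, hC0, fun q hq => ?_⟩
  rw [← sub_smul_dslope f (1 / 2) q, norm_smul, norm_sub_half]
  calc _ ≤ 1 / 2 * ‖1 - 2 * q‖ * C := by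
        gcongr
        exact hC q (mem_closedBall_zero_iff.mpr hq)
    _ ≤ C * ‖1 - 2 * q‖ := by nlinarith [mul_nonneg hC0 (norm_nonneg (1 - 2 * q))]

lemma aF_half : aF (1 / 2) = 1 / 3 := by
  norm_num [aF]

lemma vF_half_mul : vF (1 / 2) * (1 / 2) = 3 / 4 := by
  norm_num [vF]

lemma exists_norm_qBinomCoeff_half_le :
    ∃ M : ℝ, 0 ≤ M ∧ ∀ j, ‖qBinomCoeff (1 / 3) (1 / 2) j‖ ≤ M := by
  obtain ⟨M, hM0, hM⟩ := exists_norm_qBinomCoeff_aF_le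
  exact ⟨M, hM0, fun j => aF_half ▸ hM (1 / 2) (by norm_num) j⟩

lemma exists_norm_numerator_sub_le : ∃ C : ℝ, 0 ≤ C ∧ ∀ q : ℂ, ‖q‖ ≤ 1 / 2 → ∀ j : ℕ,
    ‖qBinomCoeff (aF q) q j * (vF q * q) ^ j - qBinomCoeff (1 / 3) (1 / 2) j * (3 / 4) ^ j‖ ≤
      C * ((j + 1) * (3 / 4) ^ j * ‖1 - 2 * q‖) := by
  obtain ⟨M, hM0, hM⟩ := exists_norm_qBinomCoeff_aF_le
  obtain ⟨K, hK0, hK⟩ := exists_norm_sub_apply_half_le (differentiableOn_vF.mul differentiableOn_id)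
  refine ⟨100 * M + M * (4 / 3 * K), by positivity, fun q hq j => ?_⟩
  have hc := norm_sub_apply_half_le (differentiableOn_qBinomCoeff j)
    (fun z hz => hM z (mem_ball_zero_iff.mp hz).le j) hq
  have hv := hK q hq
  simp only [Pi.mul_apply, id_eq] at hv
  rw [vF_half_mul] at hv
  rw [aF_half] at hc
  have hpow := mul_norm_pow_sub_pow_le (norm_vF_mul_le_of_le_half hq)
    (by norm_num : ‖(3 / 4 : ℂ)‖ ≤ 3 / 4) j
  have hpow' : ‖(vF q * q) ^ j - (3 / 4) ^ j‖ ≤ 4 / 3 * (j * (3 / 4) ^ j * (K * ‖1 - 2 * q‖)) := by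
    have : j * (3 / 4) ^ j * ‖vF q * q - 3 / 4‖ ≤ j * (3 / 4) ^ j * (K * ‖1 - 2 * q‖) := by gcongr
    linarith
  have hchalf := hM (1 / 2) (by norm_num) j
  rw [aF_half] at hchalf
  calc _ = ‖(qBinomCoeff (aF q) q j - qBinomCoeff (1 / 3) (1 / 2) j) * (vF q * q) ^ j +
          qBinomCoeff (1 / 3) (1 / 2) j * ((vF q * q) ^ j - (3 / 4) ^ j)‖ := by ring_nf
    _ ≤ 100 * M * ‖1 - 2 * q‖ * (3 / 4) ^ j +
          M * (4 / 3 * (j * (3 / 4) ^ j * (K * ‖1 - 2 * q‖))) := by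
        refine (norm_add_le _ _).trans ?_
        rw [norm_mul, norm_mul, norm_pow]
        gcongr
        exact norm_vF_mul_le_of_le_half hq
    _ ≤ _ := by
        have h1 : 0 ≤ 100 * M * ((3 / 4) ^ j * ‖1 - 2 * q‖) * j := by positivity
        have h2 : 0 ≤ M * (4 / 3 * K) * ((3 / 4) ^ j * ‖1 - 2 * q‖) := by positivity
        linarith

lemma norm_frozen_numerator_le {M : ℝ} {j : ℕ} (hM : ‖qBinomCoeff (1 / 3) (1 / 2) j‖ ≤ M) :
    ‖qBinomCoeff (1 / 3) (1 / 2) j * (3 / 4) ^ j‖ ≤ M * (3 / 4) ^ j := by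
  rw [norm_mul, norm_pow, norm_div, Complex.norm_ofNat, Complex.norm_ofNat]
  gcongr

lemma add_one_mul_pow_mul_div_max_le {x : ℝ} (hx : 0 ≤ x) (j : ℕ) :
    (j + 1) * (3 / 4) ^ j * (x / max x ((1 / 2) ^ (j + 2))) ≤
      16 / 9 * ((1 + |((j + 2 : ℤ) : ℝ)|) *
        ((3 / 2) ^ (j + 2 : ℤ) * min x (2 ^ (-(j + 2 : ℤ))))) := by
  have hzpow : (2 : ℝ) ^ (-(j + 2 : ℤ)) = (1 / 2) ^ (j + 2) := by
    rw [zpow_neg, ← inv_zpow, one_div]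
    norm_cast
  have hb : (0 : ℝ) < (1 / 2) ^ (j + 2) := by positivity
  have hmax : 0 < max x ((1 / 2) ^ (j + 2)) := lt_max_of_lt_right hb
  have hdiv : x / max x ((1 / 2) ^ (j + 2)) = min x ((1 / 2) ^ (j + 2)) / (1 / 2) ^ (j + 2) := by
    rw [div_eq_div_iff hmax.ne' hb.ne', min_mul_max]
  have hpow : (3 / 4 : ℝ) ^ j / (1 / 2) ^ (j + 2) = 16 / 9 * (3 / 2) ^ (j + 2 : ℤ) := by
    have hsplit : (3 / 4 : ℝ) ^ j = (3 / 2) ^ j * (1 / 2) ^ j := by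
      rw [← mul_pow]
      norm_num
    rw [show (3 / 2 : ℝ) ^ (j + 2 : ℤ) = (3 / 2) ^ (j + 2) by norm_cast, hsplit, pow_add, pow_add]
    field_simp
    norm_num
  calc _ = (j + 1) * ((3 / 4) ^ j / (1 / 2) ^ (j + 2) * min x ((1 / 2) ^ (j + 2))) := by
        rw [hdiv]
        ring
    _ = 16 / 9 * ((j + 1) * ((3 / 2) ^ (j + 2 : ℤ) * min x ((1 / 2) ^ (j + 2)))) := by
        rw [hpow]
        ring
    _ ≤ _ := by
        rw [hzpow, add_comm 1]
        gcongr
        push_cast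
        linarith [le_abs_self ((j : ℝ) + 2)]

lemma norm_div_sub_div_le {N N₀ D D₀ : ℂ} {m a b c : ℝ} (hm : 0 < m) (hD : m ≤ 8 * ‖D‖)
    (hD₀ : m ≤ ‖D₀‖) (hN : ‖N - N₀‖ ≤ a) (hN₀ : ‖N₀‖ ≤ b) (hDD₀ : ‖D - D₀‖ ≤ c * m) :
    ‖N / D - N₀ / D₀‖ ≤ 8 * (a + b * c) / m := by
  have hDpos : 0 < ‖D‖ := by linarith
  have hD₀pos : 0 < ‖D₀‖ := by linarith
  have hDne := norm_pos_iff.mp hDpos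
  have hD₀ne := norm_pos_iff.mp hD₀pos
  have hsplit : N / D - N₀ / D₀ = (N - N₀) / D - N₀ * (D - D₀) / (D * D₀) := by
    field_simp
    ring
  have ha := (norm_nonneg _).trans hN
  have hb := (norm_nonneg _).trans hN₀
  have hcm := (norm_nonneg _).trans hDD₀
  calc ‖N / D - N₀ / D₀‖ ≤ ‖N - N₀‖ / ‖D‖ + ‖N₀‖ * ‖D - D₀‖ / (‖D‖ * ‖D₀‖) := by
        rw [hsplit, ← norm_mul, ← norm_mul, ← norm_div, ← norm_div]
        exact norm_sub_le _ _
    _ ≤ a / (m / 8) + b * (c * m) / (m / 8 * m) := by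
        gcongr <;> linarith
    _ = 8 * (a + b * c) / m := by
        field_simp

lemma exists_norm_poleSum_term_sub_le : ∃ C : ℝ, 0 ≤ C ∧ ∀ q : ℂ, ‖q‖ ≤ 1 / 2 → ∀ j : ℕ,
    ‖qBinomCoeff (aF q) q j * (vF q * q) ^ j / (1 - 2 * q + q ^ (j + 2)) -
      qBinomCoeff (1 / 3) (1 / 2) j * (3 / 4) ^ j / (1 - 2 * q + (1 / 2) ^ (j + 2))‖ ≤
      C * ((j + 1) * (3 / 4) ^ j * (‖1 - 2 * q‖ / max ‖1 - 2 * q‖ ((1 / 2) ^ (j + 2)))) := by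
  obtain ⟨K, hK0, hK⟩ := exists_norm_numerator_sub_le
  obtain ⟨M, hM0, hM⟩ := exists_norm_qBinomCoeff_half_le
  refine ⟨8 * K + 16 * M, by positivity, fun q hq j => ?_⟩
  have hD₀ := max_le_norm_add (one_sub_two_mul_re_nonneg hq)
    (by positivity : (0 : ℝ) ≤ (1 / 2) ^ (j + 2))
  have hpow := norm_pow_sub_half_pow_le hq (j + 2)
  push_cast at hD₀ hpow
  have hDD₀ : ‖1 - 2 * q + q ^ (j + 2) - (1 - 2 * q + (1 / 2) ^ (j + 2))‖ ≤
      (j + 2) * ‖1 - 2 * q‖ * max ‖1 - 2 * q‖ ((1 / 2) ^ (j + 2)) := by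
    rw [add_sub_add_left_eq_sub, mul_right_comm]
    exact hpow.trans (by gcongr; exact le_max_right _ _)
  refine (norm_div_sub_div_le (lt_max_of_lt_right (by positivity))
    (max_le_eight_mul_norm_add_pow hq j) hD₀ (hK q hq j) (norm_frozen_numerator_le (hM j))
    hDD₀).trans ?_
  rw [← mul_div_assoc, ← mul_div_assoc]
  refine div_le_div_of_nonneg_right ?_ (by positivity)
  have : 0 ≤ M * ((3 / 4) ^ j * ‖1 - 2 * q‖) * j := by positivity
  linarith

lemma exists_norm_poleSum_sub_frozenPoleSum_le : ∃ C : ℝ, 0 ≤ C ∧ ∀ q : ℂ, ‖q‖ < 1 / 2 →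
    ‖poleSum q - frozenPoleSum (1 - 2 * q)‖ ≤ C * dyadicMinSum ‖1 - 2 * q‖ := by
  obtain ⟨C, hC0, hC⟩ := exists_norm_poleSum_term_sub_le
  refine ⟨C * (16 / 9), by positivity, fun q hq => ?_⟩
  have hs0 := one_sub_two_mul_ne_zero (mem_ball_zero_iff.mpr hq)
  have hfrozen := (hasSum_frozenPoleSum hs0 (one_sub_two_mul_re_nonneg hq.le)).summable
  have hterm (j : ℕ) := (hC q hq.le j).trans (mul_le_mul_of_nonneg_left
    (add_one_mul_pow_mul_div_max_le (norm_nonneg (1 - 2 * q)) j) hC0)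
  simp only [← mul_assoc C] at hterm
  have hinj : Function.Injective fun j : ℕ => (j + 2 : ℤ) := fun i j h => by simpa using h
  have hdiff := summable_of_norm_le_dyadicMinSum_term hinj (norm_nonneg _) hterm
  have hpole := hdiff.add hfrozen
  simp only [sub_add_cancel] at hpole
  rw [poleSum, frozenPoleSum, ← hpole.tsum_sub hfrozen]
  exact norm_tsum_le_mul_dyadicMinSum hinj (norm_nonneg _) (by positivity) hterm

lemma exists_norm_mul_frozenPoleSum_le : ∃ C : ℝ, 0 ≤ C ∧ ∀ s : ℂ, 0 ≤ s.re →
    ‖s * frozenPoleSum s‖ ≤ C * dyadicMinSum ‖s‖ := by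
  obtain ⟨M, hM0, hM⟩ := exists_norm_qBinomCoeff_half_le
  refine ⟨M * (16 / 9), by positivity, fun s hs => ?_⟩
  have hinj : Function.Injective fun j : ℕ => (j + 2 : ℤ) := fun i j h => by simpa using h
  rw [frozenPoleSum, ← tsum_mul_left]
  refine norm_tsum_le_mul_dyadicMinSum hinj (norm_nonneg s) (by positivity) fun j => ?_
  have hD := max_le_norm_add hs (by positivity : (0 : ℝ) ≤ (1 / 2) ^ (j + 2))
  push_cast at hD
  have : 0 < max ‖s‖ ((1 / 2) ^ (j + 2)) := lt_max_of_lt_right (by positivity)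
  calc _ ≤ ‖s‖ * (M * (3 / 4) ^ j / max ‖s‖ ((1 / 2) ^ (j + 2))) := by
        rw [norm_mul, norm_div]
        gcongr
        exact norm_frozen_numerator_le (hM j)
    _ = M * (1 * (3 / 4) ^ j * (‖s‖ / max ‖s‖ ((1 / 2) ^ (j + 2)))) := by ring
    _ ≤ M * ((j + 1) * (3 / 4) ^ j * (‖s‖ / max ‖s‖ ((1 / 2) ^ (j + 2)))) := by
        gcongr
        exact le_add_of_nonneg_left j.cast_nonneg
    _ ≤ _ := by
        rw [mul_assoc M]
        exact mul_le_mul_of_nonneg_left (add_one_mul_pow_mul_div_max_le (norm_nonneg s) j) hM0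

end Unfreezing

section SingularExpansion

open Metric

lemma prudentBinom_half : prudentBinom (1 / 2) = qBinomSeries (1 / 3) (1 / 2) (3 / 4) := by
  rw [prudentBinom, aF_half, vF_half_mul]

lemma poleWeight_half : poleWeight (1 / 2) = 1 / (16 * qBinomSeries (1 / 3) (1 / 2) (3 / 4)) := by
  rw [poleWeight, prudentBinom_half, show uF (1 / 2) = 1 by norm_num [uF], ← div_div, ← div_div]
  norm_num

lemma exists_norm_sq_mul_CF_sub_le : ∃ C : ℝ, 0 ≤ C ∧ ∀ q : ℂ, ‖q‖ < 1 / 2 →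
    ‖(1 - 2 * q) ^ 2 * CF q - 1 / 4‖ ≤ C * ‖1 - 2 * q‖ := by
  obtain ⟨C, hC0, hC⟩ := exists_norm_sub_apply_half_le
    (f := fun q => 2 * q * (3 - 10 * q + 9 * q ^ 2 - q ^ 3) / (1 - q))
    (DifferentiableOn.div (by fun_prop) (by fun_prop) fun q => one_sub_ne_zero_of_mem_ball)
  refine ⟨C, hC0, fun q hq => ?_⟩
  have hs0 := one_sub_two_mul_ne_zero (mem_ball_zero_iff.mpr hq)
  have h := hC q hq.le
  norm_num at h
  convert h using 3
  rw [CF, ← div_div]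
  field_simp

lemma exists_norm_poleWeight_half_mul_frozenPoleSum_le : ∃ C : ℝ, 0 ≤ C ∧ ∀ s : ℂ, s ≠ 0 →
    0 ≤ s.re → ‖poleWeight (1 / 2) * frozenPoleSum s + kappaProduct / 9 * dyadicPoleSum s + 1 / 4‖ ≤
      C * dyadicMinSum ‖s‖ := by
  obtain ⟨C, hC0, hC⟩ := exists_norm_frozenPoleSum_sub_le
  refine ⟨‖poleWeight (1 / 2)‖ * C, by positivity, fun s hs0 hs => ?_⟩
  have hφ := prudentBinom_ne_zero (q := 1 / 2) (by norm_num)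
  rw [prudentBinom_half] at hφ
  calc _ = ‖poleWeight (1 / 2) * (frozenPoleSum s -
          16 / 9 * qBinomLimit (1 / 3) (1 / 2) * dyadicPoleSum s +
          4 * qBinomSeries (1 / 3) (1 / 2) (3 / 4))‖ := by
        rw [poleWeight_half, kappaProduct_eq]
        congr 1
        field_simp
        ring
    _ ≤ _ := by
        rw [norm_mul, mul_assoc ‖_‖]
        gcongr
        exact hC s hs0 hs

lemma exists_norm_poleWeight_mul_poleSum_sub_le : ∃ C : ℝ, 0 ≤ C ∧ ∀ q : ℂ, ‖q‖ < 1 / 2 →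
    ‖poleWeight q * poleSum q - poleWeight (1 / 2) * frozenPoleSum (1 - 2 * q)‖ ≤
      C * dyadicMinSum ‖1 - 2 * q‖ := by
  obtain ⟨A, hA0, hA⟩ := exists_norm_sub_apply_half_le differentiableOn_poleWeight
  obtain ⟨B, hB0, hB⟩ := exists_norm_poleSum_sub_frozenPoleSum_le
  obtain ⟨T, hT0, hT⟩ := exists_norm_mul_frozenPoleSum_le
  refine ⟨(‖poleWeight (1 / 2)‖ + A * 2) * B + A * T, by positivity, fun q hq => ?_⟩
  have hW : ‖poleWeight q‖ ≤ ‖poleWeight (1 / 2)‖ + A * 2 := by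
    refine (norm_le_norm_add_norm_sub' _ (poleWeight (1 / 2))).trans ?_
    gcongr
    exact (hA q hq.le).trans (by gcongr; exact norm_one_sub_two_mul_le hq.le)
  calc _ = ‖poleWeight q * (poleSum q - frozenPoleSum (1 - 2 * q)) +
          (poleWeight q - poleWeight (1 / 2)) * frozenPoleSum (1 - 2 * q)‖ := by ring_nf
    _ ≤ ‖poleWeight q‖ * ‖poleSum q - frozenPoleSum (1 - 2 * q)‖ +
          A * ‖1 - 2 * q‖ * ‖frozenPoleSum (1 - 2 * q)‖ := by
        refine (norm_add_le _ _).trans ?_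
        rw [norm_mul, norm_mul]
        gcongr
        exact hA q hq.le
    _ = ‖poleWeight q‖ * ‖poleSum q - frozenPoleSum (1 - 2 * q)‖ +
          A * ‖(1 - 2 * q) * frozenPoleSum (1 - 2 * q)‖ := by rw [norm_mul, mul_assoc A]
    _ ≤ (‖poleWeight (1 / 2)‖ + A * 2) * (B * dyadicMinSum ‖1 - 2 * q‖) +
          A * (T * dyadicMinSum ‖1 - 2 * q‖) := by
        gcongr
        · exact hB q hq
        · exact hT _ (one_sub_two_mul_re_nonneg hq.le)
    _ = _ := by ring

lemma exists_norm_sq_mul_prudentContinuation_add_le : ∃ C : ℝ, 0 ≤ C ∧ ∀ q : ℂ, ‖q‖ < 1 / 2 →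
    ‖(1 - 2 * q) ^ 2 * prudentContinuation q + kappaProduct / 9 * dyadicPoleSum (1 - 2 * q)‖ ≤
      C * dyadicMinSum ‖1 - 2 * q‖ := by
  obtain ⟨A, hA0, hA⟩ := exists_norm_poleWeight_half_mul_frozenPoleSum_le
  obtain ⟨B, hB0, hB⟩ := exists_norm_poleWeight_mul_poleSum_sub_le
  obtain ⟨D, hD0, hD⟩ := exists_norm_sq_mul_CF_sub_le
  refine ⟨A + B + D, by positivity, fun q hq => ?_⟩
  have hs0 := one_sub_two_mul_ne_zero (mem_ball_zero_iff.mpr hq)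
  have hfrozen := hA _ hs0 (one_sub_two_mul_re_nonneg hq.le)
  have hpole := hB q hq
  have hreg : ‖(1 - 2 * q) ^ 2 * CF q - 1 / 4‖ ≤ D * dyadicMinSum ‖1 - 2 * q‖ :=
    (hD q hq).trans (by
      gcongr
      exact le_dyadicMinSum (norm_nonneg _) (norm_one_sub_two_mul_le hq.le))
  have hcont : (1 - 2 * q) ^ 2 * prudentContinuation q =
      poleWeight q * poleSum q + (1 - 2 * q) ^ 2 * CF q := by
    rw [prudentContinuation, mul_add, mul_div_cancel₀ _ (pow_ne_zero 2 hs0)]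
  set W := poleWeight (1 / 2) * frozenPoleSum (1 - 2 * q)
  calc _ = ‖(W + kappaProduct / 9 * dyadicPoleSum (1 - 2 * q) + 1 / 4) +
          (poleWeight q * poleSum q - W) + ((1 - 2 * q) ^ 2 * CF q - 1 / 4)‖ := by
        rw [hcont]
        ring_nf
    _ ≤ A * dyadicMinSum ‖1 - 2 * q‖ + B * dyadicMinSum ‖1 - 2 * q‖ +
          D * dyadicMinSum ‖1 - 2 * q‖ :=
        norm_add_le_of_le (norm_add_le_of_le hfrozen hpole) hreg
    _ = _ := by ring

lemma exists_norm_prudentContinuation_add_le : ∃ C : ℝ, 0 ≤ C ∧ ∀ q : ℂ, ‖q‖ < 1 / 2 →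
    ‖prudentContinuation q + kappaProduct / 9 * dyadicHarmonicGen (2 * q)‖ ≤
      C * ‖1 - 2 * q‖ ^ (-gExp) * (1 + |Real.log ‖1 - 2 * q‖|) := by
  obtain ⟨A, hA0, hA⟩ := exists_norm_sq_mul_prudentContinuation_add_le
  obtain ⟨B, hB0, hB⟩ := exists_dyadicMinSum_le
  refine ⟨(A + ‖(kappaProduct / 9 : ℂ)‖ * 16) * B, by positivity, fun q hq => ?_⟩
  have hs0 := one_sub_two_mul_ne_zero (mem_ball_zero_iff.mpr hq)
  have hx : 0 < ‖1 - 2 * q‖ := norm_pos_iff.mpr hs0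
  have hgen := norm_sq_mul_dyadicHarmonicGen_sub_le hs0 (one_sub_two_mul_re_nonneg hq.le) (by
    rw [sub_sub_cancel, norm_mul, Complex.norm_ofNat]
    linarith)
  rw [sub_sub_cancel] at hgen
  have hsq : ‖(1 - 2 * q) ^ 2 * (prudentContinuation q +
      kappaProduct / 9 * dyadicHarmonicGen (2 * q))‖ ≤
      (A + ‖(kappaProduct / 9 : ℂ)‖ * 16) * dyadicMinSum ‖1 - 2 * q‖ := by
    calc _ = ‖((1 - 2 * q) ^ 2 * prudentContinuation q +
            kappaProduct / 9 * dyadicPoleSum (1 - 2 * q)) + kappaProduct / 9 *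
            ((1 - 2 * q) ^ 2 * dyadicHarmonicGen (2 * q) - dyadicPoleSum (1 - 2 * q))‖ := by ring_nf
      _ ≤ A * dyadicMinSum ‖1 - 2 * q‖ +
            ‖(kappaProduct / 9 : ℂ)‖ * (16 * dyadicMinSum ‖1 - 2 * q‖) :=
          norm_add_le_of_le (hA q hq) ((norm_mul _ _).trans_le (by gcongr))
      _ = _ := by ring
  rw [norm_mul, norm_pow] at hsq
  have hpow : ‖1 - 2 * q‖ ^ (-gExp) = ‖1 - 2 * q‖ ^ (2 - gExp) / ‖1 - 2 * q‖ ^ 2 := by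
    rw [← Real.rpow_sub_natCast hx.ne', Nat.cast_ofNat, sub_sub_cancel_left]
  calc _ ≤ (A + ‖(kappaProduct / 9 : ℂ)‖ * 16) *
          (B * ‖1 - 2 * q‖ ^ (2 - gExp) * (1 + |Real.log ‖1 - 2 * q‖|)) / ‖1 - 2 * q‖ ^ 2 := by
        rw [le_div_iff₀' (by positivity)]
        exact hsq.trans (by gcongr; exact hB _ hx)
    _ = _ := by
        rw [hpow]
        ring

end SingularExpansion

section Transfer

lemma hasFPowerSeriesOnBall_ofScalars {f : ℂ → ℂ} {c : ℕ → ℂ}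
    (hc : ∀ z, ‖z‖ < 1 → HasSum (fun n => c n * z ^ n) (f z)) :
    HasFPowerSeriesOnBall f (FormalMultilinearSeries.ofScalars ℂ c) 0 1 where
  r_le := ENNReal.le_of_forall_nnreal_lt fun r hr => by
    have h := (hc (r : ℝ) (by simpa using hr)).summable.tendsto_atTop_zero.norm
    refine FormalMultilinearSeries.le_radius_of_tendsto _ (l := 0) ?_
    simpa [FormalMultilinearSeries.norm_apply_eq_norm_coef] using h
  r_pos := one_pos
  hasSum {z} hz := by
    have h := hc z (by simpa [← ofReal_norm] using hz)
    simpa only [FormalMultilinearSeries.apply_eq_pow_smul_coeff,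
      FormalMultilinearSeries.coeff_ofScalars, smul_eq_mul, mul_comm, zero_add] using h

lemma norm_coeff_le_integral {f : ℂ → ℂ} {c : ℕ → ℂ}
    (hc : ∀ z, ‖z‖ < 1 → HasSum (fun n => c n * z ^ n) (f z)) {ρ : ℝ} (hρ0 : 0 < ρ) (hρ1 : ρ < 1)
    (n : ℕ) : ‖c n‖ ≤
      ((2 * Real.pi)⁻¹ * ∫ θ in 0..2 * Real.pi, ‖f (circleMap 0 ρ θ)‖) * ρ⁻¹ ^ n := by
  have hball := hasFPowerSeriesOnBall_ofScalars hc
  have hcauchy := DifferentiableOn.hasFPowerSeriesOnBall (R := ⟨ρ, hρ0.le⟩)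
    (hball.differentiableOn.mono fun z hz => by
      have := (mem_closedBall_zero_iff.mp hz).trans_lt hρ1
      simpa [← ofReal_norm] using this) hρ0
  have h := norm_cauchyPowerSeries_le f 0 ρ n
  rw [abs_of_pos hρ0] at h
  have heq := hball.hasFPowerSeriesAt.eq_formalMultilinearSeries hcauchy.hasFPowerSeriesAt
  change _ = cauchyPowerSeries f 0 ρ at heq
  rwa [← heq, FormalMultilinearSeries.norm_apply_eq_norm_coef,
    FormalMultilinearSeries.coeff_ofScalars] at h

lemma norm_one_sub_circleMap_sq (ρ θ : ℝ) :
    ‖1 - circleMap 0 ρ θ‖ ^ 2 = (1 - ρ) ^ 2 + 2 * ρ * (1 - Real.cos θ) := by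
  have h : circleMap 0 ρ θ = ⟨ρ * Real.cos θ, ρ * Real.sin θ⟩ := by
    apply Complex.ext <;> simp [circleMap]
  rw [← Complex.normSq_eq_norm_sq, Complex.normSq_apply, h]
  simp only [Complex.sub_re, Complex.sub_im, Complex.one_re, Complex.one_im]
  linear_combination ρ ^ 2 * Real.sin_sq_add_cos_sq θ

lemma add_abs_div_four_le_norm_one_sub_circleMap {a θ : ℝ} (ha0 : 0 ≤ a) (ha : a ≤ 1 / 2)
    (hθ : |θ| ≤ Real.pi) : (a + |θ|) / 4 ≤ ‖1 - circleMap 0 (1 - a) θ‖ := by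
  have hπ : Real.pi ^ 2 ≤ 10 := by nlinarith [Real.pi_lt_d2, Real.pi_pos]
  have hcos : 1 / 5 * θ ^ 2 ≤ 1 - Real.cos θ := by
    have : 1 / 5 * θ ^ 2 ≤ 2 / Real.pi ^ 2 * θ ^ 2 := by
      refine mul_le_mul_of_nonneg_right ?_ (sq_nonneg θ)
      rw [div_le_div_iff₀ (by norm_num) (by positivity)]
      linarith
    linarith [Real.cos_le_one_sub_mul_cos_sq hθ]
  refine (sq_le_sq₀ (by positivity) (norm_nonneg _)).mp ?_
  rw [norm_one_sub_circleMap_sq]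
  have hmul : θ ^ 2 / 5 ≤ 2 * (1 - a) * (1 - Real.cos θ) := by nlinarith [sq_nonneg θ]
  nlinarith [sq_nonneg (a - |θ|), sq_abs θ]

lemma integral_add_rpow_neg_le {p a b : ℝ} (hp : 1 < p) (ha : 0 < a) (hb : 0 ≤ b) :
    ∫ θ in 0..b, (a + θ) ^ (-p) ≤ a ^ (1 - p) / (p - 1) := by
  have hzero : (0 : ℝ) ∉ Set.uIcc a (a + b) := by
    rw [Set.uIcc_of_le (by linarith)]
    exact fun h => ha.not_ge h.1
  rw [intervalIntegral.integral_comp_add_left (fun x => x ^ (-p)) a, add_zero,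
    integral_rpow (Or.inr ⟨by linarith, hzero⟩), show -p + 1 = 1 - p by ring,
    ← neg_div_neg_eq, neg_sub, neg_sub]
  have : 0 < p - 1 := by linarith
  gcongr
  exact sub_le_self _ (by positivity)

lemma continuous_add_abs_rpow {a : ℝ} (ha : 0 < a) (p : ℝ) :
    Continuous fun θ : ℝ => (a + |θ|) ^ p :=
  (by fun_prop : Continuous fun θ : ℝ => a + |θ|).rpow_const fun θ => Or.inl (by positivity)

lemma integral_add_abs_rpow_neg_le {p a b : ℝ} (hp : 1 < p) (ha : 0 < a) (hb : 0 ≤ b) :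
    ∫ θ in -b..b, (a + |θ|) ^ (-p) ≤ 2 * (a ^ (1 - p) / (p - 1)) := by
  have hcont := continuous_add_abs_rpow ha (-p)
  have hright : ∫ θ in 0..b, (a + |θ|) ^ (-p) = ∫ θ in 0..b, (a + θ) ^ (-p) :=
    intervalIntegral.integral_congr fun θ hθ => by
      rw [Set.uIcc_of_le hb] at hθ
      simp only [abs_of_nonneg hθ.1]
  have hleft : ∫ θ in -b..0, (a + |θ|) ^ (-p) = ∫ θ in 0..b, (a + |θ|) ^ (-p) := by
    simpa only [abs_neg, neg_zero] using
      (intervalIntegral.integral_comp_neg (a := 0) (b := b) fun θ => (a + |θ|) ^ (-p)).symm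
  rw [← intervalIntegral.integral_add_adjacent_intervals (b := 0) (hcont.intervalIntegrable _ _)
    (hcont.intervalIntegrable _ _), hleft, hright, ← two_mul]
  exact mul_le_mul_of_nonneg_left (integral_add_rpow_neg_le hp ha hb) zero_le_two

lemma norm_one_sub_circleMap_rpow_neg_le {p a θ : ℝ} (hp : 0 ≤ p) (ha0 : 0 < a) (ha : a ≤ 1 / 2)
    (hθ : |θ| ≤ Real.pi) :
    ‖1 - circleMap 0 (1 - a) θ‖ ^ (-p) ≤ 4 ^ p * (a + |θ|) ^ (-p) := by
  have h := add_abs_div_four_le_norm_one_sub_circleMap ha0.le ha hθ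
  calc _ ≤ ((a + |θ|) / 4) ^ (-p) :=
        Real.rpow_le_rpow_of_nonpos (by positivity) h (neg_nonpos.mpr hp)
    _ = 4 ^ p * (a + |θ|) ^ (-p) := by
        rw [Real.div_rpow (by positivity) zero_le_four, Real.rpow_neg zero_le_four, div_inv_eq_mul,
          mul_comm]

lemma integral_norm_circleMap_le {f : ℂ → ℂ} {p a K : ℝ} (hp : 1 < p) (ha0 : 0 < a)
    (ha : a ≤ 1 / 2) (hK : 0 ≤ K) (hf : ContinuousOn f (Metric.sphere 0 (1 - a)))
    (hfK : ∀ z, ‖z‖ = 1 - a → ‖f z‖ ≤ K * ‖1 - z‖ ^ (-p)) :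
    ∫ θ in 0..2 * Real.pi, ‖f (circleMap 0 (1 - a) θ)‖ ≤
      K * 4 ^ p * (2 * (a ^ (1 - p) / (p - 1))) := by
  have hmem (θ : ℝ) : ‖circleMap 0 (1 - a) θ‖ = 1 - a := by
    rw [norm_circleMap_zero, abs_of_pos (by linarith)]
  have hcont : Continuous fun θ => ‖f (circleMap 0 (1 - a) θ)‖ :=
    (hf.comp_continuous (continuous_circleMap 0 _) fun θ =>
      mem_sphere_zero_iff_norm.mpr (hmem θ)).norm
  have hperiodic : Function.Periodic (fun θ => ‖f (circleMap 0 (1 - a) θ)‖) (2 * Real.pi) :=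
    (periodic_circleMap 0 (1 - a)).comp fun z => ‖f z‖
  have hshift := hperiodic.intervalIntegral_add_eq 0 (-Real.pi)
  rw [zero_add, show -Real.pi + 2 * Real.pi = Real.pi by ring] at hshift
  calc _ ≤ ∫ θ in -Real.pi..Real.pi, K * 4 ^ p * (a + |θ|) ^ (-p) := by
        rw [hshift]
        refine intervalIntegral.integral_mono_on (by linarith [Real.pi_pos])
          (hcont.intervalIntegrable _ _)
          (((continuous_add_abs_rpow ha0 _).const_mul _).intervalIntegrable _ _) fun θ hθ => ?_
        rw [mul_assoc]
        exact (hfK _ (hmem θ)).trans (mul_le_mul_of_nonneg_left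
          (norm_one_sub_circleMap_rpow_neg_le (by linarith) ha0 ha (abs_le.mpr hθ)) hK)
    _ ≤ _ := by
        rw [intervalIntegral.integral_const_mul]
        exact mul_le_mul_of_nonneg_left (integral_add_abs_rpow_neg_le hp ha0 Real.pi_pos.le)
          (by positivity)

lemma inv_one_sub_one_div_pow_le {n : ℕ} (hn : 2 ≤ n) :
    (1 - 1 / (n : ℝ))⁻¹ ^ n ≤ Real.exp 2 := by
  have : (2 : ℝ) ≤ n := mod_cast hn
  have hinv : (n : ℝ)⁻¹ ≤ 1 / 2 := by rw [inv_le_comm₀] <;> norm_num <;> linarith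
  have hpos : (0 : ℝ) < (n : ℝ)⁻¹ := by positivity
  have hbase : (1 - 1 / (n : ℝ))⁻¹ ≤ Real.exp (2 * (n : ℝ)⁻¹) := by
    rw [one_div, inv_le_iff_one_le_mul₀ (by linarith)]
    nlinarith [Real.add_one_le_exp (2 * (n : ℝ)⁻¹)]
  calc _ ≤ Real.exp (2 * (n : ℝ)⁻¹) ^ n := by
        gcongr
        rw [one_div, inv_nonneg]
        linarith
    _ = Real.exp 2 := by
        rw [← Real.exp_nat_mul]
        field_simp

lemma exists_norm_coeff_le {p : ℝ} (hp : 1 < p) : ∃ C : ℝ, 0 ≤ C ∧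
    ∀ (f : ℂ → ℂ) (c : ℕ → ℂ), (∀ z, ‖z‖ < 1 → HasSum (fun n => c n * z ^ n) (f z)) →
      ∀ (n : ℕ) (K : ℝ), 2 ≤ n → 0 ≤ K →
        (∀ z, ‖z‖ = 1 - 1 / (n : ℝ) → ‖f z‖ ≤ K * ‖1 - z‖ ^ (-p)) →
          ‖c n‖ ≤ C * K * (n : ℝ) ^ (p - 1) := by
  have : 0 < p - 1 := sub_pos.mpr hp
  refine ⟨(2 * Real.pi)⁻¹ * (4 ^ p * (2 / (p - 1))) * Real.exp 2, by positivity,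
    fun f c hc n K hn hK hf => ?_⟩
  have hn2 : (2 : ℝ) ≤ n := mod_cast hn
  have ha0 : 0 < 1 / (n : ℝ) := by positivity
  have ha : 1 / (n : ℝ) ≤ 1 / 2 := by gcongr
  have hcont : ContinuousOn f (Metric.sphere 0 (1 - 1 / (n : ℝ))) :=
    (hasFPowerSeriesOnBall_ofScalars hc).continuousOn.mono fun z hz => by
      have : ‖z‖ < 1 := by rw [mem_sphere_zero_iff_norm.mp hz]; linarith
      simpa [← ofReal_norm] using this
  have hpow : (1 / (n : ℝ)) ^ (1 - p) = (n : ℝ) ^ (p - 1) := by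
    rw [one_div, Real.inv_rpow n.cast_nonneg, ← Real.rpow_neg n.cast_nonneg, neg_sub]
  calc ‖c n‖ ≤ ((2 * Real.pi)⁻¹ * ∫ θ in 0..2 * Real.pi, ‖f (circleMap 0 (1 - 1 / (n : ℝ)) θ)‖) *
          (1 - 1 / (n : ℝ))⁻¹ ^ n := norm_coeff_le_integral hc (by linarith) (by linarith) n
    _ ≤ ((2 * Real.pi)⁻¹ * (K * 4 ^ p * (2 * ((n : ℝ) ^ (p - 1) / (p - 1))))) * Real.exp 2 := by
        rw [← hpow]
        gcongr
        · exact pow_nonneg (inv_nonneg.mpr (by linarith)) n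
        · exact integral_norm_circleMap_le hp ha0 ha hK hcont hf
        · exact inv_one_sub_one_div_pow_le hn
    _ = _ := by ring

lemma one_add_abs_log_le {n : ℕ} (hn : 2 ≤ n) {x : ℝ} (hx : 1 / (n : ℝ) ≤ x) (hx2 : x ≤ 2) :
    1 + |Real.log x| ≤ 3 * Real.log n := by
  have hn2 : (2 : ℝ) ≤ n := mod_cast hn
  have hpos : 0 < 1 / (n : ℝ) := by positivity
  have hlower := Real.log_le_log hpos hx
  have hupper := Real.log_le_log (hpos.trans_le hx) (hx2.trans hn2)
  have hlog := Real.log_le_log two_pos hn2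
  rw [one_div, Real.log_inv] at hlower
  linarith [abs_le.mpr ⟨hlower, hupper⟩, Real.log_two_gt_d9]

lemma hasSum_prudentContinuation_add {c : ℕ → ℂ} {r : ℝ} (hr : 0 < r)
    (hc : ∀ q : ℂ, ‖q‖ < r → HasSum (fun n => c n * q ^ n) (PAseries q)) {z : ℂ} (hz : ‖z‖ < 1) :
    HasSum (fun n => (c n / 2 ^ n + kappaProduct / 9 * dyadicHarmonicSum n) * z ^ n)
      (prudentContinuation (z / 2) + kappaProduct / 9 * dyadicHarmonicGen z) := by
  have hz2 : ‖z / 2‖ < 1 / 2 := by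
    rw [norm_div, Complex.norm_ofNat]
    linarith
  refine ((hasSum_prudentContinuation hr hc hz2).add
    ((hasSum_dyadicHarmonicGen hz).mul_left _)).congr_fun fun n => ?_
  rw [div_pow]
  ring

lemma exists_norm_coeff_add_dyadicHarmonicSum_le {c : ℕ → ℂ} {r : ℝ} (hr : 0 < r)
    (hc : ∀ q : ℂ, ‖q‖ < r → HasSum (fun n => c n * q ^ n) (PAseries q)) :
    ∃ C : ℝ, 0 ≤ C ∧ ∀ n : ℕ, 2 ≤ n →
      ‖c n / 2 ^ n + kappaProduct / 9 * dyadicHarmonicSum n‖ ≤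
        C * (n : ℝ) ^ (gExp - 1) * Real.log n := by
  obtain ⟨A, hA0, hA⟩ := exists_norm_coeff_le one_lt_gExp
  obtain ⟨B, hB0, hB⟩ := exists_norm_prudentContinuation_add_le
  refine ⟨A * (3 * B), by positivity, fun n hn => ?_⟩
  have : (2 : ℝ) ≤ n := mod_cast hn
  have hpos : 0 < 1 / (n : ℝ) := by positivity
  have : 0 ≤ Real.log n := Real.log_natCast_nonneg n
  refine (hA _ _ (fun z => hasSum_prudentContinuation_add hr hc) n (B * (3 * Real.log n)) hn
    (by positivity) fun z hz => ?_).trans_eq (by ring)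
  have hq : ‖z / 2‖ < 1 / 2 := by
    rw [norm_div, hz, Complex.norm_ofNat]
    linarith
  have hlower := norm_sub_norm_le 1 z
  have hupper := norm_sub_le 1 z
  rw [norm_one, hz] at hlower hupper
  have h := hB (z / 2) hq
  rw [mul_div_cancel₀ z two_ne_zero] at h
  refine h.trans ?_
  rw [mul_right_comm]
  gcongr
  exact one_add_abs_log_le hn (by linarith) (by linarith)

lemma exists_norm_coeff_sub_le {c : ℕ → ℂ} {r : ℝ} (hr : 0 < r)
    (hc : ∀ q : ℂ, ‖q‖ < r → HasSum (fun n => c n * q ^ n) (PAseries q)) :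
    ∃ C : ℝ, 0 < C ∧ ∀ n : ℕ, 2 ≤ n →
      ‖c n - ((kappa0 : ℂ) + kappaFun (Real.logb 2 n)) *
          (((2 : ℝ) ^ n * (n : ℝ) ^ gExp : ℝ) : ℂ)‖ ≤
        C * 2 ^ n * (n : ℝ) ^ (gExp - 1) * Real.log n := by
  obtain ⟨C, hC0, hC⟩ := exists_norm_coeff_add_dyadicHarmonicSum_le hr hc
  refine ⟨C + 1, by positivity, fun n hn => ?_⟩
  have hmain := kappa_mul_rpow_eq_dyadicHarmonicSum (x := n) (by positivity)
  have : 0 ≤ Real.log n := Real.log_natCast_nonneg n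
  calc _ = ‖(2 : ℂ) ^ n * (c n / 2 ^ n + kappaProduct / 9 * dyadicHarmonicSum n)‖ := by
        rw [ofReal_mul, mul_left_comm, hmain, mul_add,
          mul_div_cancel₀ _ (pow_ne_zero n two_ne_zero)]
        push_cast
        ring_nf
    _ = 2 ^ n * ‖c n / 2 ^ n + kappaProduct / 9 * dyadicHarmonicSum n‖ := by
        rw [norm_mul, norm_pow, Complex.norm_ofNat]
    _ ≤ 2 ^ n * (C * (n : ℝ) ^ (gExp - 1) * Real.log n) := by gcongr; exact hC n hn
    _ = C * 2 ^ n * (n : ℝ) ^ (gExp - 1) * Real.log n := by ring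
    _ ≤ (C + 1) * 2 ^ n * (n : ℝ) ^ (gExp - 1) * Real.log n := by gcongr; linarith

end Transfer

end PrudentPolygon

open PrudentPolygon

/-- The number `PA_n` of 3-sided prudent polygons of area `n` satisfies
`PA_n = [κ₀ + κ(log₂ n)] 2ⁿ n^g + O(2ⁿ n^{g-1} log n)` with `g = log₂ 3`, where `κ` is
a smooth periodic function of period 1 and mean value zero given by an absolutely
convergent Fourier series. -/
theorem PA_coefficient_asymptotics :
    Summable (fun k : ℤ => ‖kappaCoef k‖) ∧
    ContDiff ℝ (⊤ : ℕ∞) kappaFun ∧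
    (∀ u : ℝ, kappaFun (u + 1) = kappaFun u) ∧
    (∫ u in (0 : ℝ)..1, kappaFun u) = 0 ∧
    ∀ c : ℕ → ℂ,
      (∃ r : ℝ, 0 < r ∧ ∀ q : ℂ, ‖q‖ < r → HasSum (fun n => c n * q ^ n) (PAseries q)) →
      ∃ Cb : ℝ, 0 < Cb ∧
        ∀ n : ℕ, 2 ≤ n →
          ‖c n - ((kappa0 : ℂ) + kappaFun (Real.logb 2 n)) *
              (((2 : ℝ) ^ n * (n : ℝ) ^ gExp : ℝ) : ℂ)‖ ≤
            Cb * 2 ^ n * (n : ℝ) ^ (gExp - 1) * Real.log n := by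
  have hdecay := rapidDecay_kappaCoef.update 0 0
  rw [kappaFun_eq_fourierSum]
  refine ⟨rapidDecay_kappaCoef.summable_norm, contDiff_fourierSum hdecay, fourierSum_add_one _,
    ?_, ?_⟩
  · rw [integral_fourierSum hdecay.summable_norm, Function.update_self]
  · rintro c ⟨r, hr, hc⟩
    rw [← kappaFun_eq_fourierSum]
    exact exists_norm_coeff_sub_le hr hc
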